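/- arXiv:math/0011230 — 4 statements merged into one kernel-verified Lean document; each statement's English description precedes it below -/
import Mathlib

section
/- There exists a commutative ring R such that: R is a principal ideal domain (and not a field); R is local with maximal ideal generated by a prime element p; R is not complete in the p-adic topology (i.e., there is a sequence in R that is Cauchy with respect to the p-adic topology but has no limit in R); R has cardinality 2^{ℵ₁}; and every R-module M that is ℵ₁-free and ℵ₁-generated is a Whitehead module, i.e., Ext¹_R(M, R) = 0. -/
/-!
Statement 0 (Eklof–Shelah, "Whitehead modules over large principal ideal domains",
Theorem 1): There is a slender (local, not `p`-adically complete) p.i.d. `R` of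
cardinality `2 ^ ℵ₁` such that every `ℵ₁`-free `ℵ₁`-generated `R`-module is a
Whitehead module.
-/

open Cardinal

universe u

/-- The first Ext group `Ext¹_R(M, N)` (as a module, via the derived-functor `Ext`). -/
noncomputable def ext1 (R : Type u) [CommRing R] (M N : Type u) [AddCommGroup M] [Module R M]
    [AddCommGroup N] [Module R N] : ModuleCat R :=
  ((Ext R (ModuleCat.{u} R) 1).obj (Opposite.op (ModuleCat.of R M))).obj (ModuleCat.of R N)

/-- `M` is a Whitehead `R`-module: `Ext¹_R(M, R) = 0`. -/
def IsWhitehead (R : Type u) [CommRing R] (M : Type u) [AddCommGroup M] [Module R M] : Prop :=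
  Subsingleton (ext1 R M R)

/-- `M` is `κ`-generated: generated by a subset of cardinality `≤ κ`. -/
def IsGenerated (R : Type u) [Semiring R] (M : Type u) [AddCommMonoid M] [Module R M]
    (κ : Cardinal.{u}) : Prop :=
  ∃ S : Set M, #S ≤ κ ∧ Submodule.span R S = ⊤

/-- `M` is `κ`-free: every submodule generated by fewer than `κ` elements is free.
(So `ℵ₁`-free means every countably generated submodule is free.) -/
def IsKappaFree (R : Type u) [Ring R] (M : Type u) [AddCommGroup M] [Module R M]
    (κ : Cardinal.{u}) : Prop :=
  ∀ S : Set M, #S < κ → Module.Free R (Submodule.span R S)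

/-- `a` is a Cauchy sequence for the `p`-adic topology on `R`. -/
def PAdicCauchy {R : Type u} [CommRing R] (p : R) (a : ℕ → R) : Prop :=
  ∀ n : ℕ, ∃ N : ℕ, ∀ j ≥ N, ∀ k ≥ N, p ^ n ∣ (a j - a k)

/-- `L` is a limit of the sequence `a` in the `p`-adic topology on `R`. -/
def PAdicLimit {R : Type u} [CommRing R] (p : R) (a : ℕ → R) (L : R) : Prop :=
  ∀ n : ℕ, ∃ N : ℕ, ∀ j ≥ N, p ^ n ∣ (a j - L)

/-- `R` is not complete in the `p`-adic topology: there is a `p`-adically Cauchy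
sequence in `R` with no limit in `R`. -/
def NotPAdicComplete (R : Type u) [CommRing R] (p : R) : Prop :=
  ∃ a : ℕ → R, PAdicCauchy p a ∧ ∀ L : R, ¬ PAdicLimit p a L

section FracClosed

open PowerSeries

variable {K : Type} [Field K]

/-- A subring of `K⟦X⟧` of the form `L ∩ K⟦X⟧`, where `L` is a subfield of the field of Laurent
series which contains `X`. -/
structure FracClosed (A : Subring K⟦X⟧) : Prop where
  X_mem : (X : K⟦X⟧) ∈ A
  mem_of_mul_mem : ∀ b ∈ A, b ≠ 0 → ∀ f, b * f ∈ A → f ∈ A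

/-- The set of power series which are quotients of elements of `A`. -/
noncomputable def fracClosure (A : Subring K⟦X⟧) : Subring K⟦X⟧ where
  carrier := {f | ∃ b ∈ A, b ≠ 0 ∧ b * f ∈ A}
  zero_mem' := ⟨1, A.one_mem, one_ne_zero, by simp⟩
  one_mem' := ⟨1, A.one_mem, one_ne_zero, by simp⟩
  add_mem' := by
    rintro f g ⟨b, hb, hb0, hf⟩ ⟨d, hd, hd0, hg⟩
    refine ⟨b * d, A.mul_mem hb hd, mul_ne_zero hb0 hd0, ?_⟩
    have := A.add_mem (A.mul_mem hd hf) (A.mul_mem hb hg)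
    convert this using 1
    ring
  mul_mem' := by
    rintro f g ⟨b, hb, hb0, hf⟩ ⟨d, hd, hd0, hg⟩
    refine ⟨b * d, A.mul_mem hb hd, mul_ne_zero hb0 hd0, ?_⟩
    have := A.mul_mem hf hg
    convert this using 1
    ring
  neg_mem' := by
    rintro f ⟨b, hb, hb0, hf⟩
    exact ⟨b, hb, hb0, by simpa using hf⟩

lemma mem_fracClosure {A : Subring K⟦X⟧} {f : K⟦X⟧} :
    f ∈ fracClosure A ↔ ∃ b ∈ A, b ≠ 0 ∧ b * f ∈ A := Iff.rfl

lemma le_fracClosure (A : Subring K⟦X⟧) : A ≤ fracClosure A :=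
  fun f hf => ⟨1, A.one_mem, one_ne_zero, by simpa using hf⟩

lemma FracClosed.fracClosure_le {A B : Subring K⟦X⟧} (hB : FracClosed B) (h : A ≤ B) :
    fracClosure A ≤ B := by
  rintro f ⟨b, hb, hb0, hf⟩
  exact hB.mem_of_mul_mem b (h hb) hb0 f (h hf)

lemma fracClosed_fracClosure {A : Subring K⟦X⟧} (hX : X ∈ A) : FracClosed (fracClosure A) where
  X_mem := le_fracClosure A hX
  mem_of_mul_mem := by
    rintro b ⟨d, hd, hd0, hdb⟩ hb0 f ⟨e, he, he0, hef⟩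
    refine ⟨e * (d * b), A.mul_mem he hdb, mul_ne_zero he0 (mul_ne_zero hd0 hb0), ?_⟩
    have := A.mul_mem hd hef
    convert this using 1
    ring

/-- The power series with coefficients in a subfield. -/
noncomputable def coeffSubring (E : Subfield K) : Subring K⟦X⟧ := (PowerSeries.map E.subtype).range

lemma mem_coeffSubring {E : Subfield K} {f : K⟦X⟧} :
    f ∈ coeffSubring E ↔ ∀ n, coeff n f ∈ E := by
  constructor
  · rintro ⟨g, rfl⟩ n
    simp
  · intro h
    refine ⟨PowerSeries.mk fun n => ⟨coeff n f, h n⟩, ?_⟩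
    ext n
    simp

lemma coeffSubring_mono {E E' : Subfield K} (h : E ≤ E') : coeffSubring E ≤ coeffSubring E' :=
  fun _ hf => mem_coeffSubring.2 fun n => h (mem_coeffSubring.1 hf n)

lemma fracClosed_coeffSubring (E : Subfield K) : FracClosed (coeffSubring E) where
  X_mem := ⟨X, by simp⟩
  mem_of_mul_mem := by
    rintro _ ⟨b, rfl⟩ hb0 f ⟨a, ha⟩
    have hb : b ≠ 0 := by rintro rfl; simp at hb0
    obtain ⟨n, u, hu⟩ := (IsDiscreteValuationRing.associated_pow_irreducible hb
      (X_prime (R := E)).irreducible)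
    have hu' : map E.subtype b * map E.subtype u = X ^ n := by
      rw [← map_mul, hu]; simp
    have key : X ^ n * f = map E.subtype (u * a) := by
      rw [← hu', map_mul, ha]
      ring
    rw [mem_coeffSubring]
    intro m
    have := congrArg (coeff (m + n)) key
    rw [add_comm, coeff_X_pow_mul'] at this
    simp only [le_add_iff_nonneg_right, zero_le, if_true, add_tsub_cancel_left, coeff_map] at this
    rw [this]
    exact Subtype.property _

variable {A : Subring K⟦X⟧}

/-- The uniformizer of a subring containing `X`. -/
noncomputable def FracClosed.unif (hA : FracClosed A) : A := ⟨X, hA.X_mem⟩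

lemma FracClosed.unif_dvd_pow_iff (hA : FracClosed A) {a : A} {n : ℕ} :
    hA.unif ^ n ∣ a ↔ (X : K⟦X⟧) ^ n ∣ a := by
  constructor
  · rintro ⟨b, rfl⟩
    exact ⟨b, rfl⟩
  · rintro ⟨g, hg⟩
    refine ⟨⟨g, hA.mem_of_mul_mem (X ^ n) (pow_mem hA.X_mem n) (pow_ne_zero _ X_ne_zero) g
      (hg ▸ a.2)⟩, Subtype.ext hg⟩

lemma FracClosed.unif_dvd_iff (hA : FracClosed A) {a : A} :
    hA.unif ∣ a ↔ constantCoeff (a : K⟦X⟧) = 0 := by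
  simpa [X_dvd_iff] using hA.unif_dvd_pow_iff (a := a) (n := 1)

lemma FracClosed.isUnit_iff (hA : FracClosed A) {a : A} :
    IsUnit a ↔ constantCoeff (a : K⟦X⟧) ≠ 0 := by
  constructor
  · intro h
    exact ((h.map A.subtype).map (constantCoeff (R := K))).ne_zero
  · intro h
    have h1 := PowerSeries.mul_inv_cancel (a : K⟦X⟧) h
    have h2 : (a : K⟦X⟧)⁻¹ ∈ A := hA.mem_of_mul_mem a a.2
      (by intro h0; simp [h0] at h) _ (h1 ▸ A.one_mem)
    exact IsUnit.of_mul_eq_one ⟨_, h2⟩ (Subtype.ext h1)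

lemma FracClosed.unif_irreducible (hA : FracClosed A) : Irreducible hA.unif := by
  refine ⟨fun h => by simp [hA.isUnit_iff, FracClosed.unif] at h, fun a b hab => ?_⟩
  have h := congrArg (Subtype.val) hab
  rw [hA.isUnit_iff, hA.isUnit_iff]
  by_contra! hcon
  obtain ⟨a', ha'⟩ := X_dvd_iff.2 hcon.1
  obtain ⟨b', hb'⟩ := X_dvd_iff.2 hcon.2
  have h' : (X : K⟦X⟧) * 1 = X * (X * (a' * b')) := by
    have : (X : K⟦X⟧) = (a : K⟦X⟧) * b := h
    rw [mul_one]
    conv_lhs => rw [this, ha', hb']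
    ring
  have := congrArg constantCoeff (mul_left_cancel₀ X_ne_zero h')
  simp at this

lemma FracClosed.isDVR (hA : FracClosed A) : IsDiscreteValuationRing A := by
  apply IsDiscreteValuationRing.ofHasUnitMulPowIrreducibleFactorization
  refine ⟨hA.unif, hA.unif_irreducible, fun {a} ha => ?_⟩
  have ha' : (a : K⟦X⟧) ≠ 0 := fun h => ha (Subtype.ext h)
  obtain ⟨n, u, hu⟩ := (IsDiscreteValuationRing.associated_pow_irreducible ha'
      (X_prime (R := K)).irreducible)
  obtain ⟨b, hb⟩ := (hA.unif_dvd_pow_iff (a := a) (n := n)).2 ⟨u⁻¹.1, by rw [← hu]; simp⟩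
  refine ⟨n, ?_⟩
  have hbu : IsUnit b := by
    rw [hA.isUnit_iff]
    have h1 : (X : K⟦X⟧) ^ n * ((b : K⟦X⟧) * (u : K⟦X⟧)) = X ^ n * 1 := by
      have h2 := congrArg Subtype.val hb
      rw [mul_one]
      conv_rhs => rw [← hu, h2]
      exact (mul_assoc _ _ _).symm
    have h3 := mul_left_cancel₀ (pow_ne_zero n (X_ne_zero (R := K))) h1
    exact ((IsUnit.of_mul_eq_one _ h3).map (constantCoeff (R := K))).ne_zero
  exact ⟨hbu.unit, by simpa using hb.symm⟩

lemma FracClosed.maximalIdeal_eq (hA : FracClosed A) [IsLocalRing A] :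
    IsLocalRing.maximalIdeal A = Ideal.span {hA.unif} := by
  ext a
  rw [IsLocalRing.mem_maximalIdeal, mem_nonunits_iff, hA.isUnit_iff, not_not,
    Ideal.mem_span_singleton, hA.unif_dvd_iff]

end FracClosed

section Residue

open PowerSeries

variable {K : Type} [Field K] {E : Subfield K} {A : Subring K⟦X⟧}

/-- The constant coefficient, as a map into a subfield containing all coefficients. -/
noncomputable def residueHom (hA : A ≤ coeffSubring E) : A →+* E :=
  ((constantCoeff (R := K)).comp A.subtype).codRestrict E fun a => by
    simpa using mem_coeffSubring.1 (hA a.2) 0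

@[simp]
lemma coe_residueHom (hA : A ≤ coeffSubring E) (a : A) :
    (residueHom hA a : K) = constantCoeff (a : K⟦X⟧) := rfl

lemma constantCoeff_eval₂ {σ : Type} (hA : A ≤ coeffSubring E) (z : σ → K⟦X⟧)
    (H : MvPolynomial σ A) :
    constantCoeff (H.eval₂ A.subtype z) =
      MvPolynomial.aeval (fun i => constantCoeff (z i)) (H.map (residueHom hA)) := by
  rw [MvPolynomial.hom_eval₂, MvPolynomial.aeval_def, MvPolynomial.eval₂_map]
  rfl

lemma coeff_coeff_eq_zero {σ : Type} (z : σ → K⟦X⟧)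
    (hz : AlgebraicIndependent E fun i => constantCoeff (z i)) (n : ℕ) :
    ∀ H : MvPolynomial σ (coeffSubring E), H.eval₂ (coeffSubring E).subtype z = 0 →
      ∀ d, coeff n (H.coeff d).1 = 0 := by
  have hE := fracClosed_coeffSubring E
  have dvd : ∀ H : MvPolynomial σ (coeffSubring E), H.eval₂ (coeffSubring E).subtype z = 0 →
      MvPolynomial.C hE.unif ∣ H := by
    intro H hH
    rw [MvPolynomial.C_dvd_iff_dvd_coeff]
    intro d
    have h1 := constantCoeff_eval₂ le_rfl z H
    rw [hH, map_zero, eq_comm, map_eq_zero_iff _ hz] at h1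
    have h2 := congrArg (MvPolynomial.coeff d) h1
    rw [MvPolynomial.coeff_map, MvPolynomial.coeff_zero] at h2
    rw [hE.unif_dvd_iff, ← coe_residueHom le_rfl, h2]
    rfl
  induction n with
  | zero =>
    intro H hH d
    have := (MvPolynomial.C_dvd_iff_dvd_coeff _ _).1 (dvd H hH) d
    rw [hE.unif_dvd_iff] at this
    simpa using this
  | succ n ih =>
    intro H hH d
    obtain ⟨H', rfl⟩ := dvd H hH
    rw [MvPolynomial.eval₂_mul, MvPolynomial.eval₂_C] at hH
    have := ih H' ((mul_eq_zero.1 hH).resolve_left X_ne_zero) d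
    rw [MvPolynomial.coeff_C_mul]
    change coeff (n + 1) (X * _) = 0
    rw [coeff_succ_X_mul, this]

lemma eq_zero_of_eval₂_eq_zero {σ : Type} (z : σ → K⟦X⟧)
    (hz : AlgebraicIndependent E fun i => constantCoeff (z i))
    {H : MvPolynomial σ (coeffSubring E)}
    (hH : H.eval₂ (coeffSubring E).subtype z = 0) : H = 0 := by
  ext d n
  simpa using coeff_coeff_eq_zero z hz n H hH d

lemma exists_eval₂_eq_of_mem_closure {σ : Type} (A : Subring K⟦X⟧) (z : σ → K⟦X⟧) {f : K⟦X⟧}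
    (hf : f ∈ Subring.closure (A ∪ Set.range z)) :
    ∃ P : MvPolynomial σ A, P.eval₂ A.subtype z = f := by
  have : Subring.closure (A ∪ Set.range z) ≤ (MvPolynomial.eval₂Hom A.subtype z).range := by
    rw [Subring.closure_le]
    rintro _ (ha | ⟨i, rfl⟩)
    · exact ⟨MvPolynomial.C ⟨_, ha⟩, by simp⟩
    · exact ⟨MvPolynomial.X i, by simp⟩
  exact this hf

/-- Adjoining power series whose constant coefficients are algebraically independent over a field
`E` produces no new quotients with coefficients in `E`. -/
lemma FracClosed.mem_of_mem_fracClosure_closure (hA : FracClosed A) (hAE : A ≤ coeffSubring E)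
    {σ : Type} (z : σ → K⟦X⟧) (hz : AlgebraicIndependent E fun i => constantCoeff (z i))
    {c : K⟦X⟧} (hcE : c ∈ coeffSubring E)
    (hc : c ∈ fracClosure (Subring.closure (A ∪ Set.range z))) : c ∈ A := by
  obtain ⟨Q', hQ', hQ0, hP'⟩ := hc
  obtain ⟨Q, rfl⟩ := exists_eval₂_eq_of_mem_closure A z hQ'
  obtain ⟨P, hP⟩ := exists_eval₂_eq_of_mem_closure A z hP'
  have key : MvPolynomial.C ⟨c, hcE⟩ * Q.map (Subring.inclusion hAE)
      - P.map (Subring.inclusion hAE) = 0 := by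
    apply eq_zero_of_eval₂_eq_zero z hz
    have : (coeffSubring E).subtype.comp (Subring.inclusion hAE) = A.subtype := rfl
    rw [MvPolynomial.eval₂_sub, MvPolynomial.eval₂_mul, MvPolynomial.eval₂_C,
      MvPolynomial.eval₂_map, MvPolynomial.eval₂_map, this, hP, mul_comm]
    exact sub_self _
  have hQ : Q ≠ 0 := by rintro rfl; simp at hQ0
  obtain ⟨d, hd⟩ := MvPolynomial.ne_zero_iff.1 hQ
  have h := congrArg Subtype.val (congrArg (MvPolynomial.coeff d) (sub_eq_zero.1 key))
  rw [MvPolynomial.coeff_C_mul, MvPolynomial.coeff_map, MvPolynomial.coeff_map] at h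
  refine hA.mem_of_mul_mem (Q.coeff d).1 (Q.coeff d).2 (fun h0 => hd (Subtype.ext h0)) c ?_
  rw [mul_comm]
  have h' : c * (Q.coeff d).1 = (P.coeff d).1 := h
  exact h' ▸ (P.coeff d).2

end Residue

section Generic

open PowerSeries

lemma algebraicIndependent_aeval_of_retraction {E K : Type} [Field E] [Field K] [Algebra E K]
    {I σ : Type} {t : I → K} (ht : AlgebraicIndependent E t) (form : σ → MvPolynomial I E)
    (G : MvPolynomial I E →ₐ[E] MvPolynomial σ E) (d : σ → E)
    (h : ∀ i, G (form i) = MvPolynomial.X i + MvPolynomial.C (d i)) :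
    AlgebraicIndependent E fun i => MvPolynomial.aeval t (form i) := by
  let T : MvPolynomial σ E →ₐ[E] MvPolynomial σ E :=
    MvPolynomial.aeval fun i => MvPolynomial.X i - MvPolynomial.C (d i)
  have hid : (T.comp G).comp (MvPolynomial.aeval form) = AlgHom.id E _ := by
    ext i : 1
    simp only [AlgHom.comp_apply, MvPolynomial.aeval_X, h, map_add, T, AlgHom.id_apply]
    simp [MvPolynomial.algebraMap_eq]
  have hinj : Function.Injective (MvPolynomial.aeval form : MvPolynomial σ E →ₐ[E] _) := by
    apply Function.LeftInverse.injective (g := T.comp G)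
    intro P
    exact DFunLike.congr_fun hid P
  have hcomp : (MvPolynomial.aeval fun i => MvPolynomial.aeval t (form i) :
      MvPolynomial σ E →ₐ[E] K) = (MvPolynomial.aeval t).comp (MvPolynomial.aeval form) := by
    ext i : 1
    simp
  change Function.Injective _
  rw [hcomp, AlgHom.coe_comp]
  exact Function.Injective.comp ht hinj

variable {K : Type} [Field K] {E : Subfield K} {A : Subring K⟦X⟧}

/-- Homomorphisms into `K⟦X⟧` extend from dense pure submodules. -/
lemma FracClosed.exists_linearMap_extension (hA : FracClosed A) {N : Type} [AddCommGroup N]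
    [Module A N] (htf : ∀ n : N, hA.unif • n = 0 → n = 0) {J : Type} (w : J → N)
    (hind : ∀ (r : J →₀ A) (n : N), Finsupp.linearCombination A w r = hA.unif • n →
      ∀ j, hA.unif ∣ r j)
    (hdense : ∀ n : N, ∃ (r : J →₀ A) (n' : N), n = Finsupp.linearCombination A w r + hA.unif • n')
    (τ : J → K⟦X⟧) :
    ∃ f : N →ₗ[A] K⟦X⟧, ∀ j, f (w j) = τ j := by
  set lc := Finsupp.linearCombination A w
  set φ := Finsupp.linearCombination A τ
  have hind' : ∀ (k : ℕ) (r : J →₀ A) (n : N), lc r = hA.unif ^ k • n →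
      ∃ r' : J →₀ A, r = hA.unif ^ k • r' := by
    intro k
    induction k with
    | zero => exact fun r n _ => ⟨r, by simp⟩
    | succ k ih =>
      intro r n h
      obtain ⟨r', rfl⟩ := ih r (hA.unif • n) (by rw [h, pow_succ, mul_smul])
      have h' : lc r' = hA.unif • n := by
        rw [map_smul, pow_succ, mul_smul] at h
        have hcancel : ∀ (k : ℕ) (m : N), hA.unif ^ k • m = 0 → m = 0 := by
          intro k
          induction k with
          | zero => intro m hm; simpa using hm
          | succ k ih => intro m hm; exact ih m (htf _ (by rwa [smul_smul, ← pow_succ']))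
        exact sub_eq_zero.1 (hcancel k _ (by rw [smul_sub, h, sub_self]))
      choose q hq using hind r' n h'
      refine ⟨Finsupp.onFinset r'.support q ?_, ?_⟩
      · intro j hj
        rw [Finsupp.mem_support_iff, hq j]
        exact mul_ne_zero hA.unif_irreducible.ne_zero hj
      · ext1 j
        simp [hq j, pow_succ, mul_assoc]
  have hdense' : ∀ (k : ℕ) (n : N), ∃ (r : J →₀ A) (n' : N), n = lc r + hA.unif ^ k • n' := by
    intro k
    induction k with
    | zero => exact fun n => ⟨0, n, by simp⟩
    | succ k ih =>
      intro n
      obtain ⟨r, n', hn⟩ := ih n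
      obtain ⟨r', n'', hn'⟩ := hdense n'
      refine ⟨r + hA.unif ^ k • r', n'', ?_⟩
      rw [hn, hn', map_add, map_smul, smul_add, pow_succ, mul_smul, add_assoc]
  have hφ : ∀ (k : ℕ) (r r' : J →₀ A) (n n' n'' : N), n = lc r + hA.unif ^ k • n' →
      n = lc r' + hA.unif ^ k • n'' → X ^ k ∣ φ r - φ r' := by
    intro k r r' n n' n'' h h'
    obtain ⟨s, hs⟩ := hind' k (r - r') (n'' - n') (by
      rw [map_sub, smul_sub, sub_eq_sub_iff_add_eq_add, ← h, add_comm, h'])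
    rw [← map_sub, hs, map_smul]
    exact ⟨φ s, rfl⟩
  choose rr nn hrn using hdense'
  let F : N → K⟦X⟧ := fun n => PowerSeries.mk fun k => coeff k (φ (rr (k + 1) n))
  have hF : ∀ (k : ℕ) (r : J →₀ A) (n n' : N), n = lc r + hA.unif ^ k • n' →
      X ^ k ∣ F n - φ r := by
    intro k r n n' h
    rw [X_pow_dvd_iff]
    intro m hm
    have h1 : n = lc r + hA.unif ^ (m + 1) • (hA.unif ^ (k - (m + 1)) • n') := by
      rw [smul_smul, ← pow_add, Nat.add_sub_cancel' hm]
      exact h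
    have := X_pow_dvd_iff.1 (hφ (m + 1) _ _ n _ _ (hrn (m + 1) n) h1) m (Nat.lt_succ_self m)
    rw [map_sub] at this
    simpa [F] using this
  have hzero : ∀ g : K⟦X⟧, (∀ k, X ^ k ∣ g) → g = 0 := by
    intro g hg
    ext k
    exact X_pow_dvd_iff.1 (hg (k + 1)) k (Nat.lt_succ_self k)
  refine ⟨{ toFun := F, map_add' := ?_, map_smul' := ?_ }, ?_⟩
  · intro n m
    rw [← sub_eq_zero]
    refine hzero _ fun k => ?_
    have h1 := hF k _ n _ (hrn k n)
    have h2 := hF k _ m _ (hrn k m)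
    have h3 := hF k (rr k n + rr k m) (n + m) (nn k n + nn k m) (by
      rw [map_add, smul_add]
      nth_rewrite 1 [hrn k n, hrn k m]
      abel)
    rw [map_add] at h3
    convert dvd_sub (dvd_sub h3 h1) h2 using 1
    ring
  · intro a n
    rw [← sub_eq_zero]
    refine hzero _ fun k => ?_
    have h1 := hF k _ n _ (hrn k n)
    have h3 := hF k (a • rr k n) (a • n) (a • nn k n) (by
      rw [map_smul, smul_comm, ← smul_add, ← hrn k n])
    rw [map_smul] at h3
    convert dvd_sub h3 (h1.mul_left (a : K⟦X⟧)) using 1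
    simp only [RingHom.id_apply, Subring.smul_def, smul_eq_mul]
    ring
  · intro j
    rw [← sub_eq_zero]
    refine hzero _ fun k => ?_
    simpa [φ] using hF k (Finsupp.single j 1) (w j) 0 (by simp [lc])

end Generic

section Reduction

open IsLocalRing

variable {A : Type} [CommRing A] [IsLocalRing A] {x : A} {N : Type} [AddCommGroup N] [Module A N]

/-- The reduction of a module modulo the maximal ideal. -/
abbrev Reduction (A N : Type) [CommRing A] [IsLocalRing A] [AddCommGroup N] [Module A N] : Type :=
  N ⧸ (maximalIdeal A • ⊤ : Submodule A N)

/-- The residue class field of `A`, in the form acting on reductions of modules. -/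
abbrev ResidueQuot (A : Type) [CommRing A] [IsLocalRing A] : Type := A ⧸ maximalIdeal A

noncomputable instance : Field (ResidueQuot A) := Ideal.Quotient.field _

/-- The reduction map. -/
abbrev reduce (A : Type) [CommRing A] [IsLocalRing A] {N : Type} [AddCommGroup N] [Module A N] :
    N →ₗ[A] Reduction A N :=
  (maximalIdeal A • ⊤ : Submodule A N).mkQ

lemma reduce_eq_zero_iff (hx : maximalIdeal A = Ideal.span {x}) {n : N} :
    reduce A n = 0 ↔ ∃ n', n = x • n' := by
  rw [Submodule.mkQ_apply, Submodule.Quotient.mk_eq_zero, hx, Submodule.ideal_span_singleton_smul,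
    Submodule.mem_smul_pointwise_iff_exists]
  simp [eq_comm]

lemma mem_span_reduce_iff {b : Set N} {n : N} :
    reduce A n ∈ Submodule.span (ResidueQuot A) (reduce A '' b) ↔
      n ∈ Submodule.span A b ⊔ maximalIdeal A • (⊤ : Submodule A N) := by
  have h := Submodule.restrictScalars_span A (ResidueQuot A) Ideal.Quotient.mk_surjective
    (reduce A '' b)
  rw [← Submodule.restrictScalars_mem A, h, ← Submodule.map_span, ← Submodule.mem_comap,
    Submodule.comap_map_mkQ, sup_comm]

/-- A finitely generated pure submodule is generated by a lift of a basis of its reduction. -/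
lemma exists_linearIndepOn_of_pure
    (hx : maximalIdeal A = Ideal.span {x})
    {P : Submodule A N} (hP : P.FG) (hpure : ∀ n, x • n ∈ P → n ∈ P) {e : N} (he : e ∈ P)
    (hex : ∀ n, e ≠ x • n) :
    ∃ b : Set N, e ∈ b ∧ b ⊆ P ∧ P ≤ Submodule.span A b ∧
      LinearIndepOn (ResidueQuot A) (reduce A) b := by
  have he0 : LinearIndepOn (ResidueQuot A) (reduce A) {e} := by
    rw [linearIndepOn_singleton_iff, Ne, reduce_eq_zero_iff hx]
    exact fun ⟨n, hn⟩ => hex n hn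
  obtain ⟨b, hbP, heb, hspan, hind⟩ :=
    exists_linearIndepOn_extension he0 (Set.singleton_subset_iff.2 he : {e} ⊆ (P : Set N))
  refine ⟨b, heb rfl, hbP, ?_, hind⟩
  refine Submodule.le_of_le_smul_of_le_jacobson_bot (I := maximalIdeal A) hP
    (jacobson_eq_maximalIdeal _ bot_ne_top).ge fun n hn => ?_
  obtain ⟨y, hy, z, hz, rfl⟩ := Submodule.mem_sup.1
    (mem_span_reduce_iff.1 (hspan ⟨n, hn, rfl⟩))
  refine Submodule.add_mem_sup hy ?_
  obtain ⟨w, rfl⟩ := (reduce_eq_zero_iff hx).1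
    ((Submodule.Quotient.mk_eq_zero _).2 hz)
  refine Submodule.smul_mem_smul (hx ▸ Ideal.mem_span_singleton_self x) (hpure w ?_)
  have hyP : y ∈ P := Submodule.span_le.2 hbP hy
  simpa using P.sub_mem hn hyP

/-- A semilinear map with prescribed values on a family independent modulo the maximal ideal. -/
lemma exists_semilinear_of_linearIndepOn (hx : maximalIdeal A = Ideal.span {x}) {S : Type}
    [CommRing S] (ρ : A →+* S) (hρ : ρ x = 0) {b : Set N}
    (hb : LinearIndepOn (ResidueQuot A) (reduce A) b) (Y : b → S) :
    ∃ L : N →+ S, (∀ a n, L (a • n) = ρ a * L n) ∧ ∀ i : b, L i = Y i := by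
  let ρ' : ResidueQuot A →+* S := Ideal.Quotient.lift _ ρ fun a ha => by
    rw [hx, Ideal.mem_span_singleton] at ha
    obtain ⟨c, rfl⟩ := ha
    rw [map_mul, hρ, zero_mul]
  let _ : Module (ResidueQuot A) S := Module.compHom S ρ'
  obtain ⟨g, hg⟩ := LinearMap.exists_leftInverse_of_injective _
    (LinearMap.ker_eq_bot.2 (hb : LinearIndependent _ _))
  let L : Reduction A N →ₗ[ResidueQuot A] S := (Finsupp.linearCombination _ Y).comp g
  refine ⟨L.toAddMonoidHom.comp (reduce A).toAddMonoidHom, fun a n => ?_, fun i => ?_⟩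
  · exact (L.map_smul (Ideal.Quotient.mk _ a : ResidueQuot A) (reduce A n) :)
  · have := LinearMap.congr_fun hg (Finsupp.single i 1)
    simp only [LinearMap.comp_apply, Finsupp.linearCombination_single, one_smul,
      LinearMap.id_apply] at this
    change Finsupp.linearCombination _ Y (g (reduce A i)) = _
    rw [this]
    simp

end Reduction

section Step

open PowerSeries IsLocalRing

variable {K : Type} [Field K] {E : Subfield K} {A : Subring K⟦X⟧}

lemma FracClosed.algebraicIndependent_constantCoeff (hA : FracClosed A) [IsLocalRing A]
    (hAE : A ≤ coeffSubring E)
    {N : Type} [AddCommGroup N] [Module A N] {J : Type} [DecidableEq J] {w : J → N} {t : J → K}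
    (ht : AlgebraicIndependent E t) (j0 : J)
    (hdense : ∀ n : N, ∃ (r : J →₀ A) (n' : N), n = Finsupp.linearCombination A w r + hA.unif • n')
    {f : N →ₗ[A] K⟦X⟧} (hf : ∀ j, f (w j) = if j = j0 then 1 else C (t j))
    {b : Set N} (hb : LinearIndepOn (ResidueQuot A) (reduce A) b) (hj0 : w j0 ∈ b) :
    AlgebraicIndependent E fun i : {n // n ∈ b ∧ n ≠ w j0} => constantCoeff (f i) := by
  classical
  set σ := {n // n ∈ b ∧ n ≠ w j0}
  have hu : residueHom hAE hA.unif = 0 := by ext; simp [FracClosed.unif]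
  obtain ⟨L, hLsmul, hL⟩ := exists_semilinear_of_linearIndepOn hA.maximalIdeal_eq
    (MvPolynomial.C.comp (residueHom hAE) : A →+* MvPolynomial σ E)
    (by rw [RingHom.comp_apply, hu, map_zero]) hb
    (fun i => if h : (i : N) ≠ w j0 then MvPolynomial.X (⟨i, i.2, h⟩ : σ) else 0)
  choose r n' hrn using hdense
  let form : (J →₀ A) → MvPolynomial J E := fun r =>
    r.sum fun j a => MvPolynomial.C (residueHom hAE a) * if j = j0 then 1 else MvPolynomial.X j
  have hform : ∀ r, MvPolynomial.aeval t (form r) =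
      constantCoeff (f (Finsupp.linearCombination A w r)) := by
    intro r
    simp only [form, Finsupp.sum, Finsupp.linearCombination_apply, map_sum, map_mul, map_smul, hf,
      Subring.smul_def, smul_eq_mul, MvPolynomial.algHom_C]
    refine Finset.sum_congr rfl fun j _ => ?_
    have h : algebraMap E K (residueHom hAE (r j)) = constantCoeff (r j : K⟦X⟧) := rfl
    split_ifs <;> simp [h]
  have hG : ∀ r, MvPolynomial.aeval (fun j => L (w j)) (form r) =
      L (Finsupp.linearCombination A w r) + MvPolynomial.C (residueHom hAE (r j0)) := by
    intro r
    have hj : L (w j0) = 0 := by simpa using hL ⟨_, hj0⟩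
    induction r using Finsupp.induction_linear with
    | zero => simp [form]
    | add r r' h h' =>
      have : form (r + r') = form r + form r' := by
        apply Finsupp.sum_add_index'
        · simp
        · intro j a a'
          rw [map_add, map_add, add_mul]
      rw [this, map_add, h, h', map_add, map_add, Finsupp.add_apply, map_add, map_add]
      abel
    | single j a =>
      simp only [form, Finsupp.linearCombination_single, hLsmul]
      rw [Finsupp.sum_single_index (by simp)]
      by_cases h : j = j0
      · subst h; simp [hj, MvPolynomial.algebraMap_eq]
      · simp [h, Ne.symm h, MvPolynomial.algebraMap_eq]
  have hfin := algebraicIndependent_aeval_of_retraction ht (fun i : σ => form (r i))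
    (MvPolynomial.aeval fun j => L (w j)) (fun i => residueHom hAE (r i j0)) (fun i => by
      rw [hG]
      congr 1
      have h := congrArg L (hrn i)
      rw [map_add, hLsmul, RingHom.comp_apply, hu, map_zero, zero_mul, add_zero] at h
      rw [← h, hL ⟨i, i.2.1⟩, dif_pos i.2.2])
  convert hfin using 2 with i
  rw [hform]
  conv_lhs => rw [hrn i, map_add, map_smul, map_add]
  simp [Subring.smul_def, FracClosed.unif]

/-- A solution of a system of linear equations can be adjoined without adding a given series. -/
theorem FracClosed.exists_solution (hA : FracClosed A) (hAE : A ≤ coeffSubring E)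
    {E' : Subfield K} (hEE' : E ≤ E') {c : K⟦X⟧} (hcE : c ∈ coeffSubring E) (hcA : c ∉ A)
    {I : Type} {t : I → K} (ht : AlgebraicIndependent E t) (htE' : ∀ i, t i ∈ E')
    {N : Type} [AddCommGroup N] [Module A N] (htf : ∀ n : N, hA.unif • n = 0 → n = 0)
    {v : I → N} (hv : Submodule.span A (Set.range v) = ⊤) {j0 : I}
    (hj0 : ∀ n, v j0 ≠ hA.unif • n)
    (hpure : ∀ S : Set N, S.Finite →
      ∃ P : Submodule A N, S ⊆ P ∧ P.FG ∧ ∀ n, hA.unif • n ∈ P → n ∈ P) :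
    ∃ f : N →ₗ[A] K⟦X⟧, f (v j0) = 1 ∧ (∀ n, f n ∈ coeffSubring E') ∧
      c ∉ fracClosure (Subring.closure (A ∪ Set.range fun i => f (v i))) := by
  classical
  have := hA.isDVR
  have hx := hA.maximalIdeal_eq
  have hsing : LinearIndepOn (ResidueQuot A) (fun i => reduce A (v i)) {j0} := by
    rw [linearIndepOn_singleton_iff, Ne, reduce_eq_zero_iff hx]
    exact fun ⟨n, hn⟩ => hj0 n hn
  obtain ⟨J, -, hJ0, hspan, hJ⟩ := exists_linearIndepOn_extension hsing (Set.subset_univ _)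
  let j1 : J := ⟨j0, hJ0 rfl⟩
  let w : J → N := fun j => v j
  have hind : ∀ (r : J →₀ A) (n : N), Finsupp.linearCombination A w r = hA.unif • n →
      ∀ j, hA.unif ∣ r j := by
    intro r n h j
    have h0 := (reduce_eq_zero_iff hx).2 ⟨n, h⟩
    rw [Finsupp.linearCombination_apply, Finsupp.sum, map_sum] at h0
    have := linearIndependent_iff'.1 hJ r.support (fun j => Ideal.Quotient.mk _ (r j))
      (by simp only [map_smul] at h0; exact h0) j
    by_cases hj : j ∈ r.support
    · rw [← Ideal.mem_span_singleton, ← hx]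
      exact Ideal.Quotient.eq_zero_iff_mem.1 (this hj)
    · rw [Finsupp.notMem_support_iff.1 hj]
      exact dvd_zero _
  have hdense : ∀ n : N, ∃ (r : J →₀ A) (n' : N),
      n = Finsupp.linearCombination A w r + hA.unif • n' := by
    have htop : Submodule.span A (Set.range w) ⊔ maximalIdeal A • ⊤ = (⊤ : Submodule A N) := by
      rw [eq_top_iff, ← hv, Submodule.span_le]
      rintro _ ⟨i, rfl⟩
      refine hv ▸ mem_span_reduce_iff.1 ?_
      have := hspan ⟨i, trivial, rfl⟩
      rw [Set.image_eq_range] at this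
      rwa [← Set.range_comp]
    intro n
    obtain ⟨y, hy, z, hz, rfl⟩ := Submodule.mem_sup.1 (htop ▸ Submodule.mem_top : n ∈ _)
    obtain ⟨r, rfl⟩ := (Finsupp.mem_span_range_iff_exists_finsupp).1 hy
    obtain ⟨n', rfl⟩ := (reduce_eq_zero_iff hx).1 ((Submodule.Quotient.mk_eq_zero _).2 hz)
    exact ⟨r, n', rfl⟩
  obtain ⟨f, hf⟩ := hA.exists_linearMap_extension htf w hind hdense
    (fun j => if j = j1 then 1 else C (t j))
  have hf1 : f (v j0) = 1 := by simpa using hf j1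
  refine ⟨f, hf1, fun n => mem_coeffSubring.2 fun k => ?_, fun hc => hcA ?_⟩
  · have hlc : ∀ r : J →₀ A, f (Finsupp.linearCombination A w r) ∈ coeffSubring E' := by
      intro r
      rw [Finsupp.linearCombination_apply, Finsupp.sum, map_sum]
      refine sum_mem fun j _ => ?_
      rw [map_smul, hf, Subring.smul_def, smul_eq_mul]
      refine mul_mem (coeffSubring_mono hEE' (hAE (r j).2)) ?_
      split_ifs
      · exact one_mem _
      · rw [mem_coeffSubring]
        intro n
        rw [coeff_C]
        split_ifs
        exacts [htE' _, zero_mem _]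
    induction k generalizing n with
    | zero =>
      obtain ⟨r, n', rfl⟩ := hdense n
      rw [map_add, map_add, map_smul]
      refine add_mem (mem_coeffSubring.1 (hlc r) 0) ?_
      simp [Subring.smul_def, FracClosed.unif]
    | succ k ih =>
      obtain ⟨r, n', rfl⟩ := hdense n
      rw [map_add, map_add, map_smul]
      refine add_mem (mem_coeffSubring.1 (hlc r) _) ?_
      simpa [Subring.smul_def, FracClosed.unif, coeff_succ_X_mul] using ih n'
  · have hfin : ∀ g ∈ Subring.closure (A ∪ Set.range fun i => f (v i)), ∃ S : Set N, S.Finite ∧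
        ∀ T : Set N, S ⊆ T → g ∈ Subring.closure (A ∪ f '' T) := by
      intro g hg
      induction hg using Subring.closure_induction with
      | mem g hg =>
        rcases hg with hg | ⟨i, rfl⟩
        · exact ⟨∅, Set.finite_empty, fun T _ => Subring.subset_closure (Or.inl hg)⟩
        · exact ⟨{v i}, Set.finite_singleton _, fun T hT =>
            Subring.subset_closure (Or.inr ⟨_, hT rfl, rfl⟩)⟩
      | zero => exact ⟨∅, Set.finite_empty, fun T _ => zero_mem _⟩
      | one => exact ⟨∅, Set.finite_empty, fun T _ => one_mem _⟩
      | add g h _ _ hg hh =>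
        obtain ⟨S, hS, hg⟩ := hg
        obtain ⟨S', hS', hh⟩ := hh
        exact ⟨S ∪ S', hS.union hS', fun T hT => add_mem (hg T (Set.union_subset_iff.1 hT).1)
          (hh T (Set.union_subset_iff.1 hT).2)⟩
      | neg g _ hg =>
        obtain ⟨S, hS, hg⟩ := hg
        exact ⟨S, hS, fun T hT => neg_mem (hg T hT)⟩
      | mul g h _ _ hg hh =>
        obtain ⟨S, hS, hg⟩ := hg
        obtain ⟨S', hS', hh⟩ := hh
        exact ⟨S ∪ S', hS.union hS', fun T hT => mul_mem (hg T (Set.union_subset_iff.1 hT).1)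
          (hh T (Set.union_subset_iff.1 hT).2)⟩
    obtain ⟨d, hd, hd0, hdc⟩ := mem_fracClosure.1 hc
    obtain ⟨S, hS, hSd⟩ := hfin _ hd
    obtain ⟨S', hS', hSd'⟩ := hfin _ hdc
    obtain ⟨P, hSP, hPfg, hPpure⟩ := hpure (insert (v j0) (S ∪ S')) ((hS.union hS').insert _)
    rw [Set.insert_subset_iff, Set.union_subset_iff] at hSP
    obtain ⟨b, heb, -, hPb, hb⟩ := exists_linearIndepOn_of_pure hx hPfg hPpure hSP.1 hj0
    have hz := hA.algebraicIndependent_constantCoeff hAE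
      (ht.comp _ Subtype.val_injective : AlgebraicIndependent E fun j : J => t j) j1 hdense hf hb
      heb
    set z : {n // n ∈ b ∧ n ≠ w j1} → K⟦X⟧ := fun i => f i
    have hle : Subring.closure (A ∪ f '' P) ≤ Subring.closure (A ∪ Set.range z) := by
      rw [Subring.closure_le, Set.union_subset_iff]
      refine ⟨Set.subset_union_left.trans Subring.subset_closure, ?_⟩
      rintro _ ⟨n, hn, rfl⟩
      refine Submodule.span_induction ?_ ?_ ?_ ?_ (hPb hn)
      · intro n hn
        by_cases h : n = w j1
        · rw [h, hf, if_pos rfl]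
          exact one_mem _
        · exact Subring.subset_closure (Or.inr ⟨⟨n, hn, h⟩, rfl⟩)
      · rw [map_zero]
        exact zero_mem _
      · intro n m _ _ hn hm
        rw [map_add]
        exact add_mem hn hm
      · intro a n _ hn
        rw [map_smul]
        exact mul_mem (Subring.subset_closure (Or.inl a.2)) hn
    exact hA.mem_of_mem_fracClosure_closure hAE z hz hcE
      (mem_fracClosure.2 ⟨d, hle (hSd _ hSP.2.1), hd0, hle (hSd' _ hSP.2.2)⟩)

end Step

section BoundedTorsion

/-- Every finitely generated submodule `U` of `N` has bounded `x`-torsion in `N ⧸ U`. -/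
def BoundedTorsion {R : Type} [CommRing R] (x : R) (N : Type) [AddCommGroup N] [Module R N] :
    Prop :=
  ∀ S : Set N, S.Finite → ∃ k : ℕ, ∀ (l : ℕ) (n : N),
    x ^ l • n ∈ Submodule.span R S → x ^ k • n ∈ Submodule.span R S

variable {R : Type} [CommRing R] [IsDomain R] {M : Type} [AddCommGroup M] [Module R M]

lemma IsKappaFree.isTorsionFree (hM : IsKappaFree R M (aleph 1)) : Module.IsTorsionFree R M := by
  refine .of_smul_eq_zero fun r m h => ?_
  have : Module.Free R (Submodule.span R {m}) := hM {m} (by simp)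
  have h' : r • (⟨m, Submodule.mem_span_singleton_self m⟩ : Submodule.span R {m}) = 0 :=
    Subtype.ext h
  exact (smul_eq_zero.1 h').imp_right (congrArg Subtype.val)

lemma IsKappaFree.boundedTorsion [IsNoetherianRing R] (hM : IsKappaFree R M (aleph 1)) {x : R}
    (hx : x ≠ 0) : BoundedTorsion x M := by
  classical
  have := hM.isTorsionFree
  intro S hS
  have hU : ∀ l : ℕ, ((Submodule.span R S).comap (LinearMap.lsmul R M (x ^ l))).FG := by
    intro l
    refine Submodule.fg_of_fg_map_injective (LinearMap.lsmul R M (x ^ l))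
      (LinearMap.lsmul_injective (pow_ne_zero l hx)) ?_
    exact Submodule.FG.of_le (Submodule.fg_span hS) (Submodule.map_comap_le _ _)
  choose T hT using hU
  have hfree := hM (⋃ l, (T l : Set M)) (by
    rw [Cardinal.lt_aleph_one_iff, Cardinal.le_aleph0_iff_set_countable]
    exact Set.countable_iUnion fun l => (T l).countable_toSet)
  set U := Submodule.span R (⋃ l, (T l : Set M)) with hUdef
  have hUiff : ∀ m, m ∈ U ↔ ∃ l, x ^ l • m ∈ Submodule.span R S := by
    intro m
    have hmono : Monotone fun l => (Submodule.span R S).comap (LinearMap.lsmul R M (x ^ l)) := by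
      refine monotone_nat_of_le_succ fun l m hm => ?_
      rw [Submodule.mem_comap, LinearMap.lsmul_apply] at hm ⊢
      rw [pow_succ', mul_smul]
      exact Submodule.smul_mem _ _ hm
    rw [hUdef, Submodule.span_iUnion]
    simp_rw [hT]
    rw [Submodule.mem_iSup_of_directed _ hmono.directed_le]
    simp
  obtain ⟨ι, B⟩ := hfree.exists_basis
  have hSU : S ⊆ U := fun s hs => (hUiff s).2 ⟨0, by simpa using Submodule.subset_span hs⟩
  obtain ⟨D, hD⟩ : ∃ D : Finset ι, ∀ u : U, (u : M) ∈ Submodule.span R S →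
      (B.repr u).support ⊆ D := by
    refine ⟨hS.toFinset.attach.biUnion fun s =>
      (B.repr ⟨s, hSU (hS.mem_toFinset.1 s.2)⟩).support, fun u hu => ?_⟩
    set D := hS.toFinset.attach.biUnion fun s =>
      (B.repr ⟨s, hSU (hS.mem_toFinset.1 s.2)⟩).support
    have hle : Submodule.span R S ≤
        ((Finsupp.supported R R (D : Set ι)).comap B.repr.toLinearMap).map U.subtype := by
      rw [Submodule.span_le]
      intro s hs
      refine ⟨⟨s, hSU hs⟩, ?_, rfl⟩
      exact Finset.coe_subset.2 (Finset.subset_biUnion_of_mem (fun s : hS.toFinset =>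
        (B.repr ⟨s, hSU (hS.mem_toFinset.1 s.2)⟩).support)
        (Finset.mem_attach _ ⟨s, hS.mem_toFinset.2 hs⟩))
    obtain ⟨u', hu', h⟩ := hle hu
    obtain rfl : u' = u := Subtype.ext h
    exact Finset.coe_subset.1 hu'
  choose l hl using fun i => (hUiff (B i)).1 (B i).2
  refine ⟨D.sup l, fun k m hm => ?_⟩
  let u : U := ⟨m, (hUiff m).2 ⟨k, hm⟩⟩
  have hu := hD (x ^ k • u) hm
  rw [map_smul, Finsupp.support_smul_eq (pow_ne_zero k hx)] at hu
  have hsum : m = ∑ i ∈ (B.repr u).support, B.repr u i • (B i : M) := by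
    have := congrArg Subtype.val (B.linearCombination_repr u)
    rw [Finsupp.linearCombination_apply, Finsupp.sum] at this
    simpa [u] using this.symm
  rw [hsum, Finset.smul_sum]
  refine sum_mem fun i hi => ?_
  rw [smul_comm, ← Nat.sub_add_cancel (Finset.le_sup (f := l) (hu hi)), pow_add, mul_smul]
  exact Submodule.smul_mem _ _ (Submodule.smul_mem _ _ (hl i))

lemma boundedTorsion_of_extension [IsDiscreteValuationRing R] {x : R} (hx : Irreducible x)
    (hM : BoundedTorsion x M) {N : Type} [AddCommGroup N] [Module R N] {π : N →ₗ[R] M} {e : N}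
    (hker : ∀ n, π n = 0 ↔ ∃ r : R, n = r • e) : BoundedTorsion x N := by
  intro S hS
  obtain ⟨k, hk⟩ := hM (π '' S) (hS.image π)
  have hdec : ∀ l n, x ^ l • n ∈ Submodule.span R S → ∃ s ∈ Submodule.span R S, ∃ r : R,
      x ^ k • n = s + r • e ∧ x ^ l • r • e ∈ Submodule.span R S := by
    intro l n hn
    have h1 := hk l (π n) (by
      rw [← map_smul, ← Submodule.map_span]; exact Submodule.mem_map_of_mem hn)
    rw [← map_smul, ← Submodule.map_span] at h1
    obtain ⟨s, hs, hsn⟩ := h1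
    obtain ⟨r, hr⟩ := (hker (x ^ k • n - s)).1 (by rw [map_sub, hsn, sub_self])
    refine ⟨s, hs, r, by rw [← hr]; abel, ?_⟩
    rw [← hr, smul_sub, smul_comm]
    exact sub_mem (Submodule.smul_mem _ _ hn) (Submodule.smul_mem _ _ hs)
  by_cases ha : ∃ a : ℕ, x ^ a • e ∈ Submodule.span R S
  · obtain ⟨a, ha⟩ := ha
    refine ⟨a + k, fun l n hn => ?_⟩
    obtain ⟨s, hs, r, h, -⟩ := hdec l n hn
    rw [pow_add, mul_smul, h, smul_add, smul_comm]
    exact add_mem (Submodule.smul_mem _ _ hs) (Submodule.smul_mem _ _ ha)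
  · refine ⟨k, fun l n hn => ?_⟩
    obtain ⟨s, hs, r, h, h'⟩ := hdec l n hn
    by_cases hr : r = 0
    · rw [h, hr, zero_smul, add_zero]
      exact hs
    · obtain ⟨b, u, rfl⟩ := IsDiscreteValuationRing.eq_unit_mul_pow_irreducible hr hx
      refine absurd ⟨l + b, ?_⟩ ha
      have := Submodule.smul_mem _ (↑u⁻¹ : R) h'
      rw [smul_smul, smul_smul] at this
      convert this using 2
      rw [pow_add, mul_mul_mul_comm, Units.inv_mul, one_mul]

end BoundedTorsion

section Presentation

variable {A : Type} [CommRing A] {I : Type}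

/-- A system of relations `q` expressing each generator, up to a power of `x`, through the
generators in `s`. -/
def Triangular (x : A) (q : I → I →₀ A) (k : I → ℕ) (s : Set I) : Prop :=
  ∀ i, Finsupp.single i (x ^ k i) - q i ∈ Finsupp.supported A A s

lemma Triangular.exists_pow_smul_sub_mem {x : A} {q : I → I →₀ A} {k : I → ℕ} {s : Set I}
    (h : Triangular x q k s) (r : I →₀ A) :
    ∃ l : ℕ, ∃ d ∈ Finsupp.supported A A s, x ^ l • r - d ∈ Submodule.span A (Set.range q) := by
  induction r using Finsupp.induction_linear with
  | zero => exact ⟨0, 0, zero_mem _, by simp⟩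
  | add r r' hr hr' =>
    obtain ⟨l, d, hd, h⟩ := hr
    obtain ⟨l', d', hd', h'⟩ := hr'
    refine ⟨l + l', x ^ l' • d + x ^ l • d',
      add_mem (Submodule.smul_mem _ _ hd) (Submodule.smul_mem _ _ hd'), ?_⟩
    convert add_mem (Submodule.smul_mem _ (x ^ l') h) (Submodule.smul_mem _ (x ^ l) h') using 1
    rw [smul_sub, smul_sub, smul_smul, smul_smul, ← pow_add, ← pow_add, smul_add, add_comm l' l]
    abel
  | single i a =>
    refine ⟨k i, _, Submodule.smul_mem _ a (h i), ?_⟩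
    have : x ^ k i • Finsupp.single i a = a • Finsupp.single i (x ^ k i) := by
      simp [mul_comm]
    rw [this, smul_sub, sub_sub_cancel]
    exact Submodule.smul_mem _ _ (Submodule.subset_span ⟨i, rfl⟩)

lemma linearCombination_eq_zero_of_mem_span {N : Type} [AddCommGroup N] [Module A N] {v : I → N}
    {q : I → I →₀ A} (hq : ∀ i, Finsupp.linearCombination A v (q i) = 0) {r : I →₀ A}
    (hr : r ∈ Submodule.span A (Set.range q)) : Finsupp.linearCombination A v r = 0 := by
  have : Submodule.span A (Set.range q) ≤ LinearMap.ker (Finsupp.linearCombination A v) := by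
    rw [Submodule.span_le]
    rintro _ ⟨i, rfl⟩
    exact hq i
  exact this hr

/-- A solution of a triangular system of relations defines a linear map. -/
lemma Triangular.exists_linearMap {x : A} {q : I → I →₀ A} {k : I → ℕ} {s : Set I}
    (h : Triangular x q k s) {N : Type} [AddCommGroup N] [Module A N] {v : I → N}
    (hv : Submodule.span A (Set.range v) = ⊤) (hs : LinearIndepOn A v s)
    (hq : ∀ i, Finsupp.linearCombination A v (q i) = 0) {Q : Type} [AddCommGroup Q] [Module A Q]
    (hQ : ∀ m : Q, x • m = 0 → m = 0) {z : I → Q}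
    (hz : ∀ i, Finsupp.linearCombination A z (q i) = 0) : ∃ g : N →ₗ[A] Q, ∀ i, g (v i) = z i := by
  have hcancel : ∀ (l : ℕ) (m : Q), x ^ l • m = 0 → m = 0 := by
    intro l
    induction l with
    | zero => intro m hm; simpa using hm
    | succ l ih => intro m hm; exact ih m (hQ _ (by rwa [smul_smul, ← pow_succ']))
  have hker : LinearMap.ker (Finsupp.linearCombination A v) ≤
      LinearMap.ker (Finsupp.linearCombination A z) := by
    intro r hr
    rw [LinearMap.mem_ker] at hr ⊢
    obtain ⟨l, d, hd, hld⟩ := h.exists_pow_smul_sub_mem r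
    have h1 := linearCombination_eq_zero_of_mem_span hq hld
    rw [map_sub, map_smul, hr, smul_zero, zero_sub, neg_eq_zero] at h1
    obtain rfl := linearIndepOn_iff.1 hs d hd h1
    have h2 := linearCombination_eq_zero_of_mem_span hz hld
    rw [sub_zero, map_smul] at h2
    exact hcancel l _ h2
  have hsurj : Function.Surjective (Finsupp.linearCombination A v) := by
    rw [← LinearMap.range_eq_top, Finsupp.range_linearCombination, hv]
  let e := (Finsupp.linearCombination A v).quotKerEquivOfSurjective hsurj
  refine ⟨((LinearMap.ker (Finsupp.linearCombination A v)).liftQ _ hker).comp e.symm.toLinearMap,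
    fun i => ?_⟩
  have : e.symm (v i) = Submodule.Quotient.mk (Finsupp.single i 1) := by
    rw [LinearEquiv.symm_apply_eq]
    simp [e]
  simp [this]

lemma exists_triangular [IsDomain A] [IsDiscreteValuationRing A] {x : A} (hx : Irreducible x)
    {N : Type} [AddCommGroup N] [Module A N] (v : I → N) :
    ∃ (q : I → I →₀ A) (k : I → ℕ) (s : Set I), Triangular x q k s ∧ LinearIndepOn A v s ∧
      ∀ i, Finsupp.linearCombination A v (q i) = 0 := by
  obtain ⟨s, hs, hmax⟩ := exists_maximal_linearIndepOn A v
  have key : ∀ i, ∃ k : ℕ, ∃ d ∈ Finsupp.supported A A s,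
      x ^ k • v i = Finsupp.linearCombination A v d := by
    intro i
    by_cases hi : i ∈ s
    · exact ⟨0, Finsupp.single i 1, Finsupp.single_mem_supported _ _ hi, by simp⟩
    · obtain ⟨a, ha, hav⟩ := hmax i hi
      obtain ⟨k, u, rfl⟩ := IsDiscreteValuationRing.eq_unit_mul_pow_irreducible ha hx
      obtain ⟨d, hd, hdv⟩ := (Finsupp.mem_span_image_iff_linearCombination A).1 hav
      refine ⟨k, (↑u⁻¹ : A) • d, Submodule.smul_mem _ _ hd, ?_⟩
      rw [map_smul, hdv, smul_smul, Units.inv_mul_cancel_left]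
  choose k d hd hkd using key
  refine ⟨fun i => Finsupp.single i (x ^ k i) - d i, k, s, fun i => ?_, hs, fun i => ?_⟩
  · rw [sub_sub_cancel]
    exact hd i
  · simp [hkd]

end Presentation

section Descent

open PowerSeries

variable {K : Type} [Field K] {E : Subfield K} {A R : Subring K⟦X⟧} {I : Type}

/-- Relations of an `R`-module with coefficients in a smaller ring `A` acquire a solution. -/
theorem FracClosed.exists_solution_of_triangular (hR : FracClosed R) (hA : FracClosed A)
    (hAR : A ≤ R) (hAE : A ≤ coeffSubring E)
    {E' : Subfield K} (hEE' : E ≤ E') {c : K⟦X⟧} (hcE : c ∈ coeffSubring E) (hcA : c ∉ A)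
    {t : I → K} (ht : AlgebraicIndependent E t) (htE' : ∀ i, t i ∈ E')
    {N : Type} [AddCommGroup N] [Module R N] [Module.IsTorsionFree R N]
    (hN : BoundedTorsion hR.unif N) {v : I → N} {j0 : I} (hj0 : ∀ n, v j0 ≠ hR.unif • n)
    {q : I → I →₀ R} {k : I → ℕ} {s : Set I} (htri : Triangular hR.unif q k s)
    (hs : LinearIndepOn R v s) (hq : ∀ i, Finsupp.linearCombination R v (q i) = 0)
    (hqA : ∀ i j, (q i j : K⟦X⟧) ∈ A) :
    ∃ z : I → K⟦X⟧, (∀ i, ((q i).sum fun j a => (a : K⟦X⟧) * z j) = 0) ∧ z j0 = 1 ∧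
      (∀ i, z i ∈ coeffSubring E') ∧ c ∉ fracClosure (Subring.closure (A ∪ Set.range z)) := by
  classical
  have := hA.isDVR
  let ι : A →+* R := Subring.inclusion hAR
  have hι : Function.Injective ι := Subring.inclusion_injective hAR
  let _ : Module A N := Module.compHom N ι
  have hιx : ∀ l : ℕ, ι (hA.unif ^ l) = hR.unif ^ l := fun l => by rw [map_pow]; rfl
  have hx : ∀ (l : ℕ) (n : N), hA.unif ^ l • n = hR.unif ^ l • n := fun l n => by
    rw [← hιx]
    rfl
  have hlc : ∀ r : I →₀ A, Finsupp.linearCombination A v r =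
      Finsupp.linearCombination R v (r.mapRange ι (map_zero ι)) := by
    intro r
    rw [Finsupp.linearCombination_apply, Finsupp.linearCombination_apply,
      Finsupp.sum_mapRange_index (by simp)]
    rfl
  have hinj : ∀ l : ℕ, Function.Injective fun n : N => hR.unif ^ l • n := fun l =>
    smul_right_injective N (pow_ne_zero l hR.unif_irreducible.ne_zero)
  let qA : I → I →₀ A := fun i => Finsupp.onFinset (q i).support (fun j => ⟨q i j, hqA i j⟩)
    fun j hj => by
      rw [Finsupp.mem_support_iff]
      intro h
      exact hj (Subtype.ext (congrArg (Subtype.val (p := (· ∈ R))) h))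
  have hqq : ∀ i, (qA i).mapRange ι (map_zero ι) = q i := fun i => by
    ext1 j
    rfl
  have htriA : Triangular hA.unif qA k s := by
    intro i j hj
    refine htri i ?_
    rw [Finset.mem_coe, Finsupp.mem_support_iff] at hj ⊢
    contrapose! hj
    apply hι
    rw [map_zero, ← hj, Finsupp.sub_apply, map_sub, Finsupp.sub_apply, ← hqq, ← hιx]
    congr 1
    by_cases h : i = j <;> simp [h]
  have hqlc : ∀ i, Finsupp.linearCombination A v (qA i) = 0 := fun i => by
    rw [hlc, hqq, hq]
  let T : Submodule A N := Submodule.span A (Set.range v)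
  let v' : I → T := fun i => ⟨v i, Submodule.subset_span ⟨i, rfl⟩⟩
  let Q : Finset I → Submodule A T := fun J =>
    { carrier := {n | ∃ l, hA.unif ^ l • (n : N) ∈ Submodule.span A (v '' J)}
      zero_mem' := ⟨0, by simp⟩
      add_mem' := by
        rintro n m ⟨l, hl⟩ ⟨l', hl'⟩
        refine ⟨l + l', ?_⟩
        rw [Submodule.coe_add, smul_add]
        refine add_mem ?_ ?_
        · rw [add_comm, pow_add, mul_smul]
          exact Submodule.smul_mem _ _ hl
        · rw [pow_add, mul_smul]
          exact Submodule.smul_mem _ _ hl'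
      smul_mem' := by
        rintro a n ⟨l, hl⟩
        refine ⟨l, ?_⟩
        rw [Submodule.coe_smul, smul_comm]
        exact Submodule.smul_mem _ _ hl }
  have hpure : ∀ S : Set T, S.Finite →
      ∃ P : Submodule A T, S ⊆ P ∧ P.FG ∧ ∀ n, hA.unif • n ∈ P → n ∈ P := by
    intro S hS
    have key : ∀ n : T, ∃ l : ℕ, ∃ d ∈ Finsupp.supported A A s,
        hA.unif ^ l • (n : N) = Finsupp.linearCombination A v d := by
      intro n
      obtain ⟨r, hr⟩ := Finsupp.mem_span_range_iff_exists_finsupp.1 n.2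
      obtain ⟨l, d, hd, h⟩ := htriA.exists_pow_smul_sub_mem r
      have h0 := linearCombination_eq_zero_of_mem_span hqlc h
      rw [map_sub, map_smul, sub_eq_zero] at h0
      exact ⟨l, d, hd, by rw [← h0, ← hr]; rfl⟩
    choose l d hd hld using key
    let J : Finset I := hS.toFinset.biUnion fun n => (d n).support
    have hJs : (J : Set I) ⊆ s := by
      intro j hj
      obtain ⟨n, -, hn⟩ := Finset.mem_biUnion.1 (Finset.mem_coe.1 hj)
      exact hd n hn
    refine ⟨Q J, fun n hn => ⟨l n, ?_⟩, ?_, fun n hn => ?_⟩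
    · rw [hld]
      refine (Finsupp.mem_span_image_iff_linearCombination A).2 ⟨d n, ?_, rfl⟩
      exact Finset.coe_subset.2
        (Finset.subset_biUnion_of_mem (fun n => (d n).support) (hS.mem_toFinset.2 hn))
    · obtain ⟨k, hk⟩ := hN (v '' J) (J.finite_toSet.image v)
      refine Submodule.fg_of_fg_map_injective
        ((LinearMap.lsmul A N (hA.unif ^ k)).comp T.subtype) ?_ ?_
      · intro n m h
        exact Subtype.ext (hinj k (by simpa [hx] using h))
      · refine Submodule.FG.of_le (Submodule.fg_span (J.finite_toSet.image v)) ?_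
        rintro _ ⟨n, ⟨l, hl⟩, rfl⟩
        obtain ⟨a, ha, hal⟩ := (Finsupp.mem_span_image_iff_linearCombination A).1 hl
        have haR : a.mapRange ι (map_zero ι) ∈ Finsupp.supported R R (J : Set I) :=
          (Finset.coe_subset.2 Finsupp.support_mapRange).trans ha
        obtain ⟨r, hr, hrk⟩ := (Finsupp.mem_span_image_iff_linearCombination R).1 (hk l n (by
          rw [← hx, ← hal, hlc]
          exact (Finsupp.mem_span_image_iff_linearCombination R).2 ⟨_, haR, rfl⟩))
        have heq : hR.unif ^ l • r = hR.unif ^ k • a.mapRange ι (map_zero ι) := by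
          rw [← sub_eq_zero]
          refine linearIndepOn_iff.1 hs _ (Finsupp.supported_mono hJs
            (sub_mem (Submodule.smul_mem _ _ hr) (Submodule.smul_mem _ _ haR))) ?_
          rw [map_sub, map_smul, map_smul, hrk, ← hlc, hal, hx, smul_comm, sub_self]
        have hrA : ∀ j, (r j : K⟦X⟧) ∈ A := by
          intro j
          refine hA.mem_of_mul_mem (X ^ l) (pow_mem hA.X_mem l) (pow_ne_zero l X_ne_zero) _ ?_
          have := congrArg (fun f => ((f j : R) : K⟦X⟧)) heq
          simp only [Finsupp.smul_apply, smul_eq_mul, Subring.coe_mul, Subring.coe_pow,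
            Finsupp.mapRange_apply] at this
          exact this ▸ mul_mem (pow_mem hA.X_mem k) (a j).2
        refine (Finsupp.mem_span_image_iff_linearCombination A).2
          ⟨Finsupp.onFinset r.support (fun j => ⟨r j, hrA j⟩) ?_, ?_, ?_⟩
        · intro j hj
          rw [Finsupp.mem_support_iff]
          intro h
          exact hj (Subtype.ext (congrArg (Subtype.val (p := (· ∈ R))) h))
        · exact (Finset.coe_subset.2 Finsupp.support_onFinset_subset).trans hr
        · rw [hlc]
          refine Eq.trans (congrArg _ ?_) (hrk.trans (hx k n).symm)
          ext1 j
          rfl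
    · obtain ⟨l, hl⟩ := hn
      refine ⟨l + 1, ?_⟩
      rwa [pow_succ, mul_smul]
  have htf : ∀ n : T, hA.unif • n = 0 → n = 0 := by
    intro n hn
    have : hR.unif ^ 1 • (n : N) = hR.unif ^ 1 • (0 : N) := by
      rw [smul_zero, pow_one]
      exact congrArg Subtype.val hn
    exact Subtype.ext (hinj 1 this)
  have hv' : Submodule.span A (Set.range v') = ⊤ := by
    have := Submodule.span_span_coe_preimage (R := A) (s := Set.range v)
    rw [← this]
    congr 1
    ext n
    simp only [Set.mem_range, Set.mem_preimage, v', Subtype.ext_iff]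
  obtain ⟨f, hf0, hfE, hfc⟩ := hA.exists_solution hAE hEE' hcE hcA ht htE' (N := T) (v := v')
    (j0 := j0) htf hv'
    (fun n hn => hj0 n (congrArg Subtype.val hn)) hpure
  refine ⟨fun i => f (v' i), fun i => ?_, hf0, fun i => hfE _, hfc⟩
  have h0 : Finsupp.linearCombination A v' (qA i) = 0 := by
      apply Subtype.ext
      rw [← Submodule.subtype_apply, ← Submodule.subtype_apply,
        Finsupp.apply_linearCombination, map_zero]
      exact hqlc i
  have h1 := congrArg f h0
  rw [Finsupp.apply_linearCombination, map_zero, Finsupp.linearCombination_apply] at h1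
  rw [← h1, ← hqq i, Finsupp.sum_mapRange_index (by simp)]
  rfl

end Descent

section Tower

open PowerSeries

variable {K : Type} [Field K]

lemma fracClosed_sSup {S : Set (Subring K⟦X⟧)} (hne : S.Nonempty) (hdir : DirectedOn (· ≤ ·) S)
    (hS : ∀ A ∈ S, FracClosed A) : FracClosed (sSup S) where
  X_mem := by
    obtain ⟨A, hA⟩ := hne
    exact le_sSup hA (hS A hA).X_mem
  mem_of_mul_mem b hb hb0 f hf := by
    rw [Subring.mem_sSup_of_directedOn hne hdir] at hb hf ⊢
    obtain ⟨A, hA, hbA⟩ := hb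
    obtain ⟨B, hB, hfB⟩ := hf
    obtain ⟨D, hD, hAD, hBD⟩ := hdir A hA B hB
    exact ⟨D, hD, (hS D hD).mem_of_mul_mem b (hAD hbA) hb0 f (hBD hfB)⟩

/-- The successor step of the construction: adjoin a solution, if there is a harmless one. -/
lemma exists_step {I : Type} (A : Subring K⟦X⟧) {E E' : Subfield K} (hEE' : E ≤ E') (c : K⟦X⟧)
    (Sol : (I → K⟦X⟧) → Prop) :
    ∃ B : Subring K⟦X⟧, A ≤ B ∧ (FracClosed A → A ≤ coeffSubring E → c ∉ A →
      FracClosed B ∧ B ≤ coeffSubring E' ∧ c ∉ B ∧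
      ∀ z, Sol z → (∀ i, z i ∈ coeffSubring E') →
        c ∉ fracClosure (Subring.closure (A ∪ Set.range z)) → ∃ z', Sol z' ∧ ∀ i, z' i ∈ B) := by
  by_cases h : ∃ z, Sol z ∧ (∀ i, z i ∈ coeffSubring E') ∧
      c ∉ fracClosure (Subring.closure (A ∪ Set.range z))
  · obtain ⟨z, hz, hzE, hzc⟩ := h
    have hcl := le_fracClosure (Subring.closure (A ∪ Set.range z))
    refine ⟨_, fun a ha => hcl (Subring.subset_closure (Or.inl ha)), fun hA hAE _ =>
      ⟨fracClosed_fracClosure (Subring.subset_closure (Or.inl hA.X_mem)), ?_, hzc, fun _ _ _ _ =>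
        ⟨z, hz, fun i => hcl (Subring.subset_closure (Or.inr ⟨i, rfl⟩))⟩⟩⟩
    refine (fracClosed_coeffSubring E').fracClosure_le (Subring.closure_le.2 ?_)
    rintro f (hf | ⟨i, rfl⟩)
    exacts [coeffSubring_mono hEE' (hAE hf), hzE i]
  · exact ⟨A, le_rfl, fun hA hAE hc => ⟨hA, hAE.trans (coeffSubring_mono hEE'), hc,
      fun z hz hzE hzc => absurd ⟨z, hz, hzE, hzc⟩ h⟩⟩

/-- A transfinite tower of rings adjoining solutions while omitting a given series. -/
theorem exists_tower {Ω I : Type} [LinearOrder Ω] [WellFoundedLT Ω] [Nonempty Ω]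
    {E E' : Ω → Subfield K} (hEE' : ∀ α, E α ≤ E' α) (hE'E : ∀ β α, β < α → E' β ≤ E α)
    {base : Subring K⟦X⟧} (hbase : FracClosed base) (hbE : ∀ α, base ≤ coeffSubring (E α))
    {c : K⟦X⟧} (hc : c ∉ base) (Sol : Ω → (I → K⟦X⟧) → Prop) :
    ∃ (R : Subring K⟦X⟧) (stage : Ω → Subring K⟦X⟧), FracClosed R ∧ base ≤ R ∧ c ∉ R ∧
      (∀ α, FracClosed (stage α) ∧ stage α ≤ coeffSubring (E α) ∧ c ∉ stage α ∧ stage α ≤ R) ∧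
      (∀ f ∈ R, ∃ β, ∀ α, β < α → f ∈ stage α) ∧
      ∀ α z, Sol α z → (∀ i, z i ∈ coeffSubring (E' α)) →
        c ∉ fracClosure (Subring.closure (stage α ∪ Set.range z)) →
        ∃ z', Sol α z' ∧ ∀ i, z' i ∈ R := by
  choose next hle hnext using fun α A => exists_step A (hEE' α) c (Sol α)
  let stage : Ω → Subring K⟦X⟧ := WellFounded.fix (wellFounded_lt (α := Ω)) fun α ih =>
    sSup (insert base {B | ∃ (β : Ω) (h : β < α), B = next β (ih β h)})
  have hstage : ∀ α, stage α = sSup (insert base ((fun β => next β (stage β)) '' Set.Iio α)) := by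
    intro α
    refine (WellFounded.fix_eq _ _ α).trans ?_
    congr 2
    ext B
    simp only [Set.mem_ofPred_eq, Set.mem_image, Set.mem_Iio]
    exact ⟨fun ⟨β, h, e⟩ => ⟨β, h, e.symm⟩, fun ⟨β, h, e⟩ => ⟨β, h, e.symm⟩⟩
  set nxt : Ω → Subring K⟦X⟧ := fun β => next β (stage β)
  have hbs : ∀ α, base ≤ stage α := fun α => by
    rw [hstage]; exact le_sSup (Set.mem_insert _ _)
  have hns : ∀ β α, β < α → nxt β ≤ stage α := fun β α h => by
    rw [hstage]; exact le_sSup (Set.mem_insert_of_mem _ ⟨β, h, rfl⟩)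
  have hsn : ∀ α, stage α ≤ nxt α := fun α => hle _ _
  have hmono : Monotone nxt := by
    intro β α h
    rcases h.eq_or_lt with rfl | h
    exacts [le_rfl, (hns β α h).trans (hsn α)]
  have hdir : ∀ s : Set Ω, DirectedOn (· ≤ ·) (insert base (nxt '' s)) := by
    intro s
    rintro A (rfl | ⟨β, hβ, rfl⟩) B (rfl | ⟨γ, hγ, rfl⟩)
    · exact ⟨_, Set.mem_insert _ _, le_rfl, le_rfl⟩
    · exact ⟨_, Set.mem_insert_of_mem _ ⟨γ, hγ, rfl⟩, (hbs γ).trans (hsn γ), le_rfl⟩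
    · exact ⟨_, Set.mem_insert_of_mem _ ⟨β, hβ, rfl⟩, le_rfl, (hbs β).trans (hsn β)⟩
    · rcases le_total β γ with h | h
      · exact ⟨_, Set.mem_insert_of_mem _ ⟨γ, hγ, rfl⟩, hmono h, le_rfl⟩
      · exact ⟨_, Set.mem_insert_of_mem _ ⟨β, hβ, rfl⟩, le_rfl, hmono h⟩
  have hmem : ∀ (s : Set Ω) (f : K⟦X⟧), f ∈ sSup (insert base (nxt '' s)) ↔
      f ∈ base ∨ ∃ β ∈ s, f ∈ nxt β := by
    intro s f
    rw [Subring.mem_sSup_of_directedOn (Set.insert_nonempty _ _) (hdir s)]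
    simp
  have hfc : ∀ s : Set Ω, (∀ β ∈ s, FracClosed (nxt β)) →
      FracClosed (sSup (insert base (nxt '' s))) := by
    refine fun s hs => fracClosed_sSup (Set.insert_nonempty _ _) (hdir s) ?_
    rintro _ (rfl | ⟨β, hβ, rfl⟩)
    exacts [hbase, hs β hβ]
  have hinv : ∀ α, FracClosed (stage α) ∧ stage α ≤ coeffSubring (E α) ∧ c ∉ stage α := by
    intro α
    induction α using WellFoundedLT.induction with
    | ind α ih =>
      have ih' := fun β hβ => hnext β _ (ih β hβ).1 (ih β hβ).2.1 (ih β hβ).2.2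
      rw [hstage]
      refine ⟨hfc _ fun β hβ => (ih' β hβ).1, sSup_le ?_, fun h => ?_⟩
      · rintro _ (rfl | ⟨β, hβ, rfl⟩)
        exacts [hbE α, (ih' β hβ).2.1.trans (coeffSubring_mono (hE'E β α hβ))]
      · rcases (hmem _ _).1 h with h | ⟨β, hβ, h⟩
        exacts [hc h, (ih' β hβ).2.2.1 h]
  have hinv' := fun α => hnext α _ (hinv α).1 (hinv α).2.1 (hinv α).2.2
  have hnR : ∀ α, nxt α ≤ sSup (insert base (nxt '' Set.univ)) := fun α =>
    le_sSup (Set.mem_insert_of_mem _ ⟨α, trivial, rfl⟩)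
  refine ⟨sSup (insert base (nxt '' Set.univ)), stage, hfc _ fun β _ => (hinv' β).1,
    le_sSup (Set.mem_insert _ _), fun h => ?_,
    fun α => ⟨(hinv α).1, (hinv α).2.1, (hinv α).2.2, (hsn α).trans (hnR α)⟩, fun f hf => ?_,
    fun α z hz hzE hzc => ?_⟩
  · rcases (hmem _ _).1 h with h | ⟨β, -, h⟩
    exacts [hc h, (hinv' β).2.2.1 h]
  · rcases (hmem _ _).1 hf with h | ⟨β, -, h⟩
    · exact ⟨Classical.arbitrary Ω, fun α _ => hbs α h⟩
    · exact ⟨β, fun α hα => hns β α hα h⟩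
  · obtain ⟨z', hz', hz'B⟩ := (hinv' α).2.2.2 z hz hzE hzc
    exact ⟨z', hz', fun i => hnR α (hz'B i)⟩

end Tower

section Index

lemma exists_forall_lt_of_mk_le {J : Type} (hJ : #J ≤ aleph 1)
    (f : J → (2 ^ aleph 1 : Cardinal.{0}).ord.ToType) : ∃ β, ∀ j, f j < β := by
  by_contra! h
  have hcof : IsCofinal (Set.range f) := fun β => by
    obtain ⟨j, hj⟩ := h β
    exact ⟨f j, ⟨j, rfl⟩, hj⟩
  have h1 := Order.cof_le hcof
  rw [Ordinal.cof_toType] at h1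
  have h2 : aleph 1 < (2 ^ aleph 1 : Cardinal.{0}).ord.cof :=
    lt_cof_ord_power (aleph0_le_aleph 1) one_lt_two
  exact absurd (h2.trans_le (h1.trans (mk_range_le.trans hJ))) (lt_irrefl _)

lemma aleph0_le_two_power_aleph_one : ℵ₀ ≤ (2 ^ aleph 1 : Cardinal.{0}) :=
  (aleph0_le_aleph 1).trans (cantor _).le

lemma exists_enumeration {C : Type} [Nonempty C] (hC : #C ≤ 2 ^ aleph 1) :
    ∃ enum : (2 ^ aleph 1 : Cardinal.{0}).ord.ToType → C, ∀ β c, ∃ α, β < α ∧ enum α = c := by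
  set Ω := (2 ^ aleph 1 : Cardinal.{0}).ord.ToType
  have hΩ : #Ω = 2 ^ aleph 1 := mk_ord_toType _
  obtain ⟨e⟩ : Nonempty (Ω ≃ Ω × C) := by
    rw [← Cardinal.eq, mk_prod, lift_id, lift_id, hΩ,
      mul_eq_left aleph0_le_two_power_aleph_one hC (mk_ne_zero C)]
  refine ⟨fun α => (e α).2, fun β c => ?_⟩
  by_contra! h
  have hle : #Ω ≤ #(Set.Iic β) :=
    mk_le_of_injective (f := fun a : Ω => (⟨e.symm (a, c), by
      by_contra hlt
      exact h _ (not_le.1 hlt) (by simp)⟩ : Set.Iic β))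
      fun a b hab => by simpa using hab
  have hlt : #(Set.Iic β) < #Ω := by
    rw [hΩ, ← Set.Iio_insert]
    refine (mk_insert_le).trans_lt (add_lt_of_lt aleph0_le_two_power_aleph_one
      ((mk_Iio_lt β (by simp)).trans_eq hΩ) (one_lt_aleph0.trans_le aleph0_le_two_power_aleph_one))
  exact absurd (hle.trans_lt hlt) (lt_irrefl _)

end Index

section Transcendentals

open IntermediateField

variable {F K Ω I : Type} [Field F] [Field K] [Algebra F K]

/-- The subfield generated by the transcendentals whose first index lies in `S`. -/
noncomputable def stageField (F : Type) [Field F] [Algebra F K] (t : Ω × I → K) (S : Set Ω) :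
    Subfield K :=
  (adjoin F (t '' {p | p.1 ∈ S})).toSubfield

lemma stageField_mono (t : Ω × I → K) {S T : Set Ω} (h : S ⊆ T) :
    stageField F t S ≤ stageField F t T := by
  have hle : adjoin F (t '' {p | p.1 ∈ S}) ≤ adjoin F (t '' {p | p.1 ∈ T}) :=
    IntermediateField.adjoin.mono F _ _ (Set.image_mono fun p hp => h hp)
  exact hle

lemma mem_stageField (t : Ω × I → K) {S : Set Ω} {α : Ω} (hα : α ∈ S) (i : I) :
    t (α, i) ∈ stageField F t S :=
  IntermediateField.subset_adjoin F _ ⟨(α, i), hα, rfl⟩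

lemma fieldRange_le_stageField (t : Ω × I → K) (S : Set Ω) :
    (algebraMap F K).fieldRange ≤ stageField F t S := by
  rintro _ ⟨a, rfl⟩
  exact IntermediateField.algebraMap_mem _ a

lemma algebraicIndependent_stageField {t : Ω × I → K} (ht : AlgebraicIndependent F t) {S : Set Ω}
    {α : Ω} (hα : α ∉ S) : AlgebraicIndependent (stageField F t S) fun i => t (α, i) := by
  have h := ht.adjoin_of_disjoint (s := {p | p.1 ∈ S}) (t := {p | p.1 = α})
    (Set.disjoint_left.2 fun p hp hp' => hα (hp' ▸ hp))
  have h' := (algebraicIndependent_adjoin_iff (E := K)).2 h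
  exact h'.comp (fun i : I => ⟨(α, i), rfl⟩) fun i j hij => by simpa using hij

end Transcendentals

section Lacunary

open PowerSeries

variable {K : Type} [Field K]

/-- The lacunary series whose nonzero coefficients are at the powers of two. -/
noncomputable def lacunary (K : Type) [Field K] : K⟦X⟧ :=
  PowerSeries.mk fun n => if 2 ^ Nat.log 2 n = n then 1 else 0

lemma lacunary_mem_coeffSubring (E : Subfield K) : lacunary K ∈ coeffSubring E := by
  rw [mem_coeffSubring]
  intro n
  rw [lacunary, coeff_mk]
  split_ifs
  exacts [E.one_mem, E.zero_mem]

/-- The subring of polynomials in the ring of power series. -/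
noncomputable def polynomialSubring (K : Type) [Field K] : Subring K⟦X⟧ :=
  (Polynomial.coeToPowerSeries.ringHom (R := K)).range

lemma lacunary_notMem_fracClosure : lacunary K ∉ fracClosure (polynomialSubring K) := by
  rw [mem_fracClosure]
  rintro ⟨_, ⟨P, rfl⟩, hP0, ⟨Q, hQ⟩⟩
  have hP : P ≠ 0 := by
    rintro rfl
    simp at hP0
  simp only [Polynomial.coeToPowerSeries.ringHom_apply] at hQ
  obtain ⟨n, hn⟩ : ∃ n, P.natDegree + Q.natDegree < 2 ^ n := ⟨_, Nat.lt_two_pow_self⟩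
  have h := congrArg (coeff (2 ^ n + P.natDegree)) hQ
  rw [Polynomial.coeff_coe, Polynomial.coeff_eq_zero_of_natDegree_lt (by omega), coeff_mul,
    Finset.sum_eq_single (P.natDegree, 2 ^ n)] at h
  · rw [Polynomial.coeff_coe, lacunary, coeff_mk, Nat.log_pow one_lt_two, if_pos rfl, mul_one] at h
    exact hP (Polynomial.leadingCoeff_eq_zero.1 h.symm)
  · rintro ⟨i, j⟩ hij hne
    rw [Finset.HasAntidiagonal.mem_antidiagonal] at hij
    simp only at hij
    rw [Polynomial.coeff_coe]
    rcases lt_trichotomy i P.natDegree with hi | hi | hi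
    · rw [lacunary, coeff_mk, if_neg, mul_zero]
      intro hm
      generalize Nat.log 2 j = m at hm
      subst hm
      have h1 : 2 ^ n < 2 ^ m := by omega
      have h2 : 2 ^ m < 2 ^ (n + 1) := by rw [pow_succ]; omega
      have := (Nat.pow_lt_pow_iff_right one_lt_two).1 h1
      have := (Nat.pow_lt_pow_iff_right one_lt_two).1 h2
      omega
    · exact absurd (Prod.ext hi (by simp only; omega)) hne
    · rw [Polynomial.coeff_eq_zero_of_natDegree_lt hi, zero_mul]
  · intro h
    exact absurd (Finset.HasAntidiagonal.mem_antidiagonal.2 (add_comm _ _)) h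

lemma FracClosed.inf {A B : Subring K⟦X⟧} (hA : FracClosed A) (hB : FracClosed B) :
    FracClosed (A ⊓ B) where
  X_mem := ⟨hA.X_mem, hB.X_mem⟩
  mem_of_mul_mem b hb hb0 f hf :=
    ⟨hA.mem_of_mul_mem b hb.1 hb0 f hf.1, hB.mem_of_mul_mem b hb.2 hb0 f hf.2⟩

/-- Rational power series with coefficients in `E`. -/
noncomputable def rationalSubring (E : Subfield K) : Subring K⟦X⟧ :=
  fracClosure (polynomialSubring K) ⊓ coeffSubring E

lemma fracClosed_rationalSubring (E : Subfield K) : FracClosed (rationalSubring E) :=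
  (fracClosed_fracClosure (RingHom.mem_range.2 ⟨Polynomial.X, by simp⟩)).inf
    (fracClosed_coeffSubring E)

lemma polynomial_mem_rationalSubring {E : Subfield K} {P : Polynomial K}
    (hP : ∀ n, P.coeff n ∈ E) : (P : K⟦X⟧) ∈ rationalSubring E :=
  ⟨le_fracClosure _ ⟨P, rfl⟩, mem_coeffSubring.2 fun n => by simpa using hP n⟩

lemma trunc_lacunary_mem_rationalSubring (E : Subfield K) (n : ℕ) :
    ((trunc n (lacunary K) : Polynomial K) : K⟦X⟧) ∈ rationalSubring E := by
  refine polynomial_mem_rationalSubring fun m => ?_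
  rw [coeff_trunc]
  split_ifs
  exacts [mem_coeffSubring.1 (lacunary_mem_coeffSubring E) m, E.zero_mem]

lemma X_pow_dvd_trunc_sub (f : K⟦X⟧) {n m : ℕ} (h : n ≤ m) :
    (X : K⟦X⟧) ^ n ∣ ((trunc m f : Polynomial K) : K⟦X⟧) - f := by
  rw [X_pow_dvd_iff]
  intro k hk
  rw [map_sub, Polynomial.coeff_coe, coeff_trunc, if_pos (hk.trans_le h), sub_self]

lemma FracClosed.notPAdicComplete {E : Subfield K} {A : Subring K⟦X⟧} (hA : FracClosed A)
    (hE : rationalSubring E ≤ A) (hc : lacunary K ∉ A) : NotPAdicComplete A hA.unif := by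
  refine ⟨fun n => ⟨_, hE (trunc_lacunary_mem_rationalSubring E n)⟩, fun n => ⟨n, ?_⟩,
    fun L hL => ?_⟩
  · intro j hj k hk
    rw [hA.unif_dvd_pow_iff]
    simpa using (X_pow_dvd_trunc_sub (lacunary K) hj).sub (X_pow_dvd_trunc_sub (lacunary K) hk)
  · refine hc ?_
    convert L.2
    rw [← sub_eq_zero]
    ext n
    obtain ⟨N, hN⟩ := hL (n + 1)
    have h1 := hN (max N (n + 1)) (le_max_left _ _)
    rw [hA.unif_dvd_pow_iff] at h1
    have h2 := h1.sub (X_pow_dvd_trunc_sub (lacunary K) (le_max_right N (n + 1)))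
    have h3 := (X_pow_dvd_iff.1 h2) n (Nat.lt_succ_self n)
    simpa using h3

end Lacunary

section Construction

open PowerSeries

lemma two_power_aleph_one_power_le {a : Cardinal.{0}} (ha : a ≤ aleph 1) :
    ((2 ^ aleph 1 : Cardinal.{0}) ^ a) ≤ 2 ^ aleph 1 := by
  rw [← power_mul]
  refine power_le_power_left two_ne_zero ?_
  exact (mul_le_mul_right ha _).trans (mul_eq_self (aleph0_le_aleph 1)).le

lemma mk_powerSeries_le {K : Type} (hK : #K ≤ 2 ^ aleph 1) : #K⟦X⟧ ≤ 2 ^ aleph 1 := by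
  have h : #((Unit →₀ ℕ) → K) ≤ (2 ^ aleph 1 : Cardinal.{0}) ^ ℵ₀ := by
    rw [← power_def, mk_eq_aleph0 (Unit →₀ ℕ)]
    exact power_le_power_right hK
  exact h.trans (two_power_aleph_one_power_le (aleph0_le_aleph 1))

lemma mk_code_le {I C : Type} (hI : #I = aleph 1) (hC : #C ≤ 2 ^ aleph 1) [Zero C] :
    #(I → I →₀ C) ≤ 2 ^ aleph 1 := by
  rw [← power_def, hI]
  refine (power_le_power_right ?_).trans (two_power_aleph_one_power_le le_rfl)
  have h : #(I →₀ C) ≤ #(I → C) := mk_le_of_injective DFunLike.coe_injective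
  refine h.trans ?_
  rw [← power_def, hI]
  exact (power_le_power_right hC).trans (two_power_aleph_one_power_le le_rfl)

/-- A field with a large independent family of transcendentals. -/
lemma exists_field_algebraicIndependent (T : Type) (hT : #T ≤ 2 ^ aleph 1) :
    ∃ (F K : Type) (_ : Field F) (_ : Field K) (_ : Algebra F K) (t : T → K),
      #F = 2 ^ aleph 1 ∧ #K ≤ 2 ^ aleph 1 ∧ AlgebraicIndependent F t := by
  have hF : #(2 ^ aleph 1 : Cardinal.{0}).ord.ToType = 2 ^ aleph 1 := mk_ord_toType _
  generalize (2 ^ aleph 1 : Cardinal.{0}).ord.ToType = F at hF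
  have : Infinite F := infinite_iff.2 (hF ▸ aleph0_le_two_power_aleph_one)
  obtain ⟨hfield⟩ := Infinite.nonempty_field (α := F)
  let P := MvPolynomial T F
  refine ⟨F, FractionRing P, hfield, inferInstance, inferInstance,
    fun i => algebraMap P (FractionRing P) (MvPolynomial.X i), hF, ?_, ?_⟩
  · rw [mk_fractionRing]
    refine MvPolynomial.cardinalMk_le_max.trans ?_
    simp [hF, hT, aleph0_le_two_power_aleph_one]
  · exact (MvPolynomial.algebraicIndependent_X T F).map'
      (f := IsScalarTower.toAlgHom F P (FractionRing P)) (IsFractionRing.injective P _)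

theorem exists_ring {I : Type} (hI : #I = aleph 1) (j0 : I) :
    ∃ (K : Type) (_ : Field K) (R : Subring K⟦X⟧) (hR : FracClosed R),
      NotPAdicComplete R hR.unif ∧ #R = 2 ^ aleph 1 ∧
      ∀ (N : Type) [AddCommGroup N] [Module R N] [Module.IsTorsionFree R N],
        BoundedTorsion hR.unif N → ∀ v : I → N, Submodule.span R (Set.range v) = ⊤ →
        (∀ n, v j0 ≠ hR.unif • n) → ∃ g : N →ₗ[R] R, g (v j0) = 1 := by
  set Ω := (2 ^ aleph 1 : Cardinal.{0}).ord.ToType with hΩdef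
  have hΩ : #Ω = 2 ^ aleph 1 := mk_ord_toType _
  have hΩne : Nonempty Ω := mk_ne_zero_iff.1 (hΩ ▸ power_ne_zero _ two_ne_zero)
  obtain ⟨F, K, _, _, _, t, hF, hK, ht⟩ := exists_field_algebraicIndependent (Ω × I) (by
    rw [mk_prod, lift_id, lift_id, hΩ, hI]
    exact mul_le_of_le aleph0_le_two_power_aleph_one le_rfl (cantor _).le)
  obtain ⟨enum, henum⟩ := exists_enumeration (mk_code_le hI (mk_powerSeries_le hK))
  obtain ⟨R, stage, hR, hbase, hc, hstage, hmem, hsol⟩ := exists_tower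
    (E := fun α => stageField F t (Set.Iio α)) (E' := fun α => stageField F t (Set.Iic α))
    (fun α => stageField_mono t Set.Iio_subset_Iic_self)
    (fun β α h => stageField_mono t (Set.Iic_subset_Iio.2 h))
    (fracClosed_rationalSubring (algebraMap F K).fieldRange)
    (fun α => inf_le_right.trans (coeffSubring_mono (fieldRange_le_stageField t _)))
    (fun h => lacunary_notMem_fracClosure h.1)
    (fun α (z : I → K⟦X⟧) => (∀ i, (enum α i).sum (fun j a => a * z j) = 0) ∧ z j0 = 1)
  refine ⟨K, inferInstance, R, hR, hR.notPAdicComplete hbase hc, le_antisymm ?_ ?_, ?_⟩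
  · exact (mk_subtype_le _).trans (mk_powerSeries_le hK)
  · rw [← hF]
    refine mk_le_of_injective (f := fun a : F => (⟨C (algebraMap F K a), hbase ?_⟩ : R)) ?_
    · rw [← Polynomial.coe_C]
      refine polynomial_mem_rationalSubring fun n => ?_
      rw [Polynomial.coeff_C]
      split_ifs
      exacts [⟨a, rfl⟩, zero_mem _]
    · intro a b hab
      exact (algebraMap F K).injective (C_injective (congrArg Subtype.val hab))
  · intro N _ _ _ hN v hv hj0
    have := hR.isDVR
    obtain ⟨q, k, s, htri, hs, hq⟩ := exists_triangular hR.unif_irreducible v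
    choose b hb using hmem
    obtain ⟨β, hβ⟩ := exists_forall_lt_of_mk_le (J := I × I)
      (by rw [mk_prod, lift_id, hI, mul_eq_self (aleph0_le_aleph 1)])
      (fun p => b (q p.1 p.2 : K⟦X⟧) (q p.1 p.2).2)
    obtain ⟨α, hβα, hα⟩ := henum β fun i => (q i).mapRange Subtype.val rfl
    have hsum (z : I → K⟦X⟧) (i : I) : (enum α i).sum (fun j a => a * z j) =
        (q i).sum fun j a => (a : K⟦X⟧) * z j := by
      rw [hα, Finsupp.sum_mapRange_index fun _ => zero_mul _]
    obtain ⟨hA, hAE, hcA, hAR⟩ := hstage α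
    obtain ⟨z, hz, hz0, hzE, hzc⟩ := FracClosed.exists_solution_of_triangular hR hA hAR hAE
      (stageField_mono t Set.Iio_subset_Iic_self) (lacunary_mem_coeffSubring _) hcA
      (algebraicIndependent_stageField ht (lt_irrefl α))
      (fun i => mem_stageField t Set.self_mem_Iic i) hN hj0 htri hs hq
      (fun i j => hb _ _ _ ((hβ (i, j)).trans hβα))
    obtain ⟨z', ⟨hz', hzone⟩, hz'R⟩ := hsol α z ⟨fun i => (hsum z i).trans (hz i), hz0⟩ hzE hzc
    obtain ⟨g, hg⟩ := htri.exists_linearMap (Q := R) (z := fun i => ⟨z' i, hz'R i⟩) hv hs hq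
      (fun m hm => by
        rw [smul_eq_mul] at hm
        exact (mul_eq_zero.1 hm).resolve_left hR.unif_irreducible.ne_zero)
      (fun i => by
        have h := (hsum z' i).symm.trans (hz' i)
        rw [Finsupp.linearCombination_apply]
        apply Subtype.ext
        refine Eq.trans ?_ h
        rw [Finsupp.sum, Finsupp.sum, AddSubmonoidClass.coe_finsetSum]
        rfl)
    exact ⟨g, (hg j0).trans (Subtype.ext hzone)⟩

end Construction

section Whitehead

open CategoryTheory

variable {R : Type} [CommRing R] {M : Type} [AddCommGroup M] [Module R M]

/-- Every extension of `M` by `R` splits. -/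
def ExtensionsSplit (R : Type) [CommRing R] (M : Type) [AddCommGroup M] [Module R M] : Prop :=
  ∀ (N : Type) [AddCommGroup N] [Module R N] (i : R →ₗ[R] N) (π : N →ₗ[R] M),
    Function.Injective i → Function.Surjective π → Function.Exact i π →
    ∃ g : N →ₗ[R] R, g (i 1) = 1

lemma ExtensionsSplit.exists_factor (hM : ExtensionsSplit R M) {P₀ P₁ P₂ : Type} [AddCommGroup P₀]
    [AddCommGroup P₁] [AddCommGroup P₂] [Module R P₀] [Module R P₁] [Module R P₂]
    {d₂ : P₂ →ₗ[R] P₁} {d₁ : P₁ →ₗ[R] P₀} {ε : P₀ →ₗ[R] M} (h₁ : Function.Exact d₂ d₁)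
    (h₀ : Function.Exact d₁ ε) (hε : Function.Surjective ε) {f : P₁ →ₗ[R] R} (hf : f ∘ₗ d₂ = 0) :
    ∃ ψ : P₀ →ₗ[R] R, ψ ∘ₗ d₁ = f := by
  let B : Submodule R (P₀ × R) := LinearMap.range (d₁.prod (-f))
  let i : R →ₗ[R] (P₀ × R) ⧸ B := B.mkQ ∘ₗ LinearMap.inr R P₀ R
  let π : (P₀ × R) ⧸ B →ₗ[R] M := B.liftQ (ε ∘ₗ LinearMap.fst R P₀ R) (by
    rintro _ ⟨p, rfl⟩
    simpa using h₀.apply_apply_eq_zero p)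
  have hB (p : P₁) : B.mkQ (d₁ p, 0) = i (f p) := by
    rw [← sub_eq_zero]
    change B.mkQ _ - B.mkQ _ = 0
    rw [← map_sub, ← LinearMap.mem_ker, Submodule.ker_mkQ]
    exact ⟨p, by simp⟩
  obtain ⟨g, hg⟩ := hM _ i π (by
      rw [injective_iff_map_eq_zero]
      intro r hr
      have hr' : ((0, r) : P₀ × R) ∈ B := (Submodule.Quotient.mk_eq_zero B).1 hr
      obtain ⟨p, hp⟩ := hr'
      obtain ⟨hp1, hp2⟩ := Prod.ext_iff.1 hp
      obtain ⟨y, rfl⟩ := (h₁ p).1 hp1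
      refine hp2.symm.trans ?_
      simpa using LinearMap.congr_fun hf y) (by
      intro m
      obtain ⟨a, rfl⟩ := hε m
      exact ⟨B.mkQ (a, 0), rfl⟩) (by
      intro n
      obtain ⟨⟨a, r⟩, rfl⟩ := B.mkQ_surjective n
      constructor
      · intro h
        obtain ⟨p, rfl⟩ := (h₀ a).1 h
        refine ⟨f p + r, ?_⟩
        rw [map_add, ← hB]
        change B.mkQ _ + B.mkQ _ = _
        rw [← map_add]
        simp
      · rintro ⟨r', hr'⟩
        rw [← hr']
        exact map_zero ε)
  refine ⟨g ∘ₗ B.mkQ ∘ₗ LinearMap.inl R P₀ R, LinearMap.ext fun p => ?_⟩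
  have h1 : g (B.mkQ (d₁ p, 0)) = f p := by
    rw [hB, ← mul_one (f p), ← smul_eq_mul, map_smul, map_smul, hg]
  exact h1

lemma ExtensionsSplit.isWhitehead (hM : ExtensionsSplit R M) : IsWhitehead R M := by
  let P := ProjectiveResolution.of (ModuleCat.of R M)
  have hzero : Limits.IsZero ((P.complex.linearYonedaObj R (ModuleCat.of R R)).homology 1) := by
    rw [← HomologicalComplex.exactAt_iff_isZero_homology,
      HomologicalComplex.exactAt_iff' _ 0 1 2 (by simp) (by simp),
      ShortComplex.moduleCat_exact_iff]
    intro (f : P.complex.X 1 ⟶ ModuleCat.of R R) hf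
    have h₁ : Function.Exact (P.complex.d 2 1).hom (P.complex.d 1 0).hom := by
      have := P.exact_succ 0
      rwa [ShortComplex.ShortExact.moduleCat_exact_iff_function_exact] at this
    have h₀ : Function.Exact (P.complex.d 1 0).hom (P.π.f 0).hom := by
      have := P.exact₀
      rwa [ShortComplex.ShortExact.moduleCat_exact_iff_function_exact] at this
    obtain ⟨ψ, hψ⟩ := hM.exists_factor (ε := (P.π.f 0).hom) h₁ h₀
      ((ModuleCat.epi_iff_surjective _).1 inferInstance) (f := f.hom)
      (congrArg ModuleCat.Hom.hom (show P.complex.d 2 1 ≫ f = 0 from hf))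
    exact ⟨ModuleCat.ofHom ψ, show P.complex.d 1 0 ≫ ModuleCat.ofHom ψ = f from
      ModuleCat.hom_ext hψ⟩
  have := hzero.of_iso (P.isoExt 1 (ModuleCat.of R R))
  exact ModuleCat.subsingleton_of_isZero this

end Whitehead

lemma IsGenerated.exists_family {R M T : Type} [Semiring R] [AddCommMonoid M] [Module R M]
    (hT : #T = aleph 1) (hM : IsGenerated R M (aleph 1)) :
    ∃ f : T → M, Submodule.span R (Set.range f) = ⊤ := by
  obtain ⟨S, hS, hspan⟩ := hM
  obtain ⟨h⟩ : Nonempty (S ↪ T) := by rwa [← hT, Cardinal.le_def] at hS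
  refine ⟨Function.extend h Subtype.val 0, top_le_iff.1 (hspan.ge.trans (Submodule.span_mono ?_))⟩
  intro s hs
  exact ⟨h ⟨s, hs⟩, h.injective.extend_apply _ _ _⟩

lemma span_range_option_elim_eq_top {R N M T : Type} [Ring R] [AddCommGroup N] [AddCommGroup M]
    [Module R N] [Module R M] {i : R →ₗ[R] N} {π : N →ₗ[R] M} (hex : Function.Exact i π)
    {v : T → N} (hv : Submodule.span R (Set.range (π ∘ v)) = ⊤) :
    Submodule.span R (Set.range fun o : Option T => o.elim (i 1) v) = ⊤ := by
  rw [eq_top_iff]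
  intro n _
  have hn : π n ∈ (Submodule.span R (Set.range v)).map π := by
    rw [Submodule.map_span, ← Set.range_comp, hv]
    trivial
  obtain ⟨m, hm, hmn⟩ := hn
  have hv' : Set.range v ⊆ Set.range fun o : Option T => o.elim (i 1) v := by
    rintro _ ⟨t, rfl⟩
    exact ⟨some t, rfl⟩
  obtain ⟨r, hr⟩ := (hex (n - m)).1 (by rw [map_sub, hmn, sub_self])
  rw [← sub_add_cancel n m, ← hr, ← mul_one r, ← smul_eq_mul, map_smul]
  exact add_mem (Submodule.smul_mem _ _ (Submodule.subset_span ⟨none, rfl⟩))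
    (Submodule.span_mono hv' hm)

lemma isTorsionFree_of_exact {R N M : Type} [CommRing R] [IsDomain R] [AddCommGroup N]
    [AddCommGroup M] [Module R N] [Module R M] [Module.IsTorsionFree R M] {i : R →ₗ[R] N}
    {π : N →ₗ[R] M} (hi : Function.Injective i) (hex : Function.Exact i π) :
    Module.IsTorsionFree R N := by
  refine .of_smul_eq_zero fun r n h => or_iff_not_imp_left.2 fun hr => ?_
  have hn : π n = 0 := (smul_eq_zero.1 (by rw [← map_smul, h, map_zero])).resolve_left hr
  obtain ⟨s, rfl⟩ := (hex n).1 hn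
  rw [← map_smul] at h
  have hs : r • s = 0 := hi (h.trans (map_zero i).symm)
  rw [(smul_eq_zero.1 hs).resolve_left hr, map_zero]

theorem exists_large_pid_aleph_one_free_implies_whitehead :
    ∃ (R : Type) (_ : CommRing R) (p : R),
      IsDomain R ∧ IsPrincipalIdealRing R ∧ ¬ IsField R ∧
      ∃ _ : IsLocalRing R, Prime p ∧ IsLocalRing.maximalIdeal R = Ideal.span {p} ∧
      NotPAdicComplete R p ∧
      #R = 2 ^ aleph 1 ∧
      ∀ (M : Type) (_ : AddCommGroup M) (_ : Module R M),
        IsKappaFree R M (aleph 1) → IsGenerated R M (aleph 1) → IsWhitehead R M := by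
  set T := (aleph 1 : Cardinal.{0}).ord.ToType
  have hT : #T = aleph 1 := mk_ord_toType _
  obtain ⟨K, _, R, hR, hcomplete, hcard, hext⟩ := exists_ring (I := Option T)
    (by rw [mk_option, hT, add_one_eq (aleph0_le_aleph 1)]) none
  have := hR.isDVR
  refine ⟨R, inferInstance, hR.unif, inferInstance, inferInstance,
    IsDiscreteValuationRing.not_isField R, inferInstance, hR.unif_irreducible.prime,
    hR.maximalIdeal_eq, hcomplete, hcard, fun M _ _ hfree hgen => ?_⟩
  refine ExtensionsSplit.isWhitehead fun N _ _ i π hi hπ hex => ?_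
  have := hfree.isTorsionFree
  have := isTorsionFree_of_exact hi hex
  obtain ⟨f, hf⟩ := hgen.exists_family hT
  obtain ⟨v, hv⟩ : ∃ v : T → N, π ∘ v = f :=
    ⟨Function.surjInv hπ ∘ f, funext fun t => Function.surjInv_eq hπ (f t)⟩
  have hsmul (r : R) : i r = r • i 1 := by rw [← map_smul, smul_eq_mul, mul_one]
  refine hext N (boundedTorsion_of_extension hR.unif_irreducible
    (hfree.boundedTorsion hR.unif_irreducible.ne_zero) (π := π) (e := i 1) fun n => ?_)
    (fun o => o.elim (i 1) v) (span_range_option_elim_eq_top hex (hv ▸ hf)) fun n hn => ?_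
  · rw [hex n]
    exact exists_congr fun r => by rw [hsmul, eq_comm]
  · simp only [Option.elim_none] at hn
    have hn' : π n = 0 := (smul_eq_zero.1
      (by rw [← map_smul, ← hn, hex.apply_apply_eq_zero])).resolve_left hR.unif_irreducible.ne_zero
    obtain ⟨r, rfl⟩ := (hex n).1 hn'
    rw [← map_smul] at hn
    exact hR.unif_irreducible.not_isUnit (.of_mul_eq_one r (hi hn).symm)
end

section
/- There exists a commutative ring R such that: R is a principal ideal domain (and not a field); R is local with maximal ideal generated by a prime element p; R is not complete in the p-adic topology; R has cardinality 2^{ℵ₁}; and there exists an R-module M that is ℵ₁-generated, is a Whitehead module (Ext¹_R(M, R) = 0), and is not a free R-module. -/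
/-!
Statement 0 (Eklof–Shelah, "Whitehead modules over large principal ideal domains",
Theorem 1): There is a slender (local, not `p`-adically complete) p.i.d. `R` of
cardinality `2 ^ ℵ₁` such that every `ℵ₁`-free `ℵ₁`-generated `R`-module is a
Whitehead module.
-/

open Cardinal

universe u

section Ext

open CategoryTheory

/-- The property that every homomorphism from the kernel of a projective presentation of `M` to `N`
extends does not depend on the presentation. -/
theorem exists_extension_of_ker_of_projective {R M N P Q : Type*} [CommRing R]
    [AddCommGroup M] [Module R M] [AddCommGroup N] [Module R N] [AddCommGroup P] [Module R P]
    [AddCommGroup Q] [Module R Q] [Module.Projective R P] [Module.Projective R Q]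
    {π : P →ₗ[R] M} {ε : Q →ₗ[R] M} (hπ : Function.Surjective π) (hε : Function.Surjective ε)
    (h : ∀ g : π.ker →ₗ[R] N, ∃ χ : P →ₗ[R] N, ∀ k, χ k.1 = g k) (g : ε.ker →ₗ[R] N) :
    ∃ χ : Q →ₗ[R] N, ∀ k, χ k.1 = g k := by
  obtain ⟨φ, hφ⟩ := Module.projective_lifting_property π ε hπ
  obtain ⟨ψ, hψ⟩ := Module.projective_lifting_property ε π hε
  have hφ' (x : Q) : π (φ x) = ε x := LinearMap.congr_fun hφ x
  have hψ' (x : P) : ε (ψ x) = π x := LinearMap.congr_fun hψ x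
  let ψ' : π.ker →ₗ[R] ε.ker :=
    (ψ ∘ₗ π.ker.subtype).codRestrict _ fun x ↦ by simp [hψ']
  let θ : Q →ₗ[R] ε.ker :=
    (ψ ∘ₗ φ - LinearMap.id).codRestrict _ fun x ↦ by simp [hψ', hφ']
  obtain ⟨χ, hχ⟩ := h (g ∘ₗ ψ')
  refine ⟨χ ∘ₗ φ - g ∘ₗ θ, fun k ↦ ?_⟩
  have hk : φ k.1 ∈ π.ker := by simp [hφ']
  have h1 : χ (φ k.1) = g (ψ' ⟨φ k.1, hk⟩) := hχ ⟨φ k.1, hk⟩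
  have h2 : ψ' ⟨φ k.1, hk⟩ - θ k.1 = k := by
    ext
    exact sub_sub_cancel (ψ (φ k.1)) k.1
  rw [LinearMap.sub_apply, LinearMap.comp_apply, LinearMap.comp_apply, h1, ← map_sub, h2]

/-- A module is a Whitehead module as soon as every functional on the kernel of some projective
presentation extends. -/
theorem isWhitehead_of_forall_exists_extension {R M P : Type u} [CommRing R]
    [AddCommGroup M] [Module R M] [AddCommGroup P] [Module R P] [Module.Projective R P]
    {π : P →ₗ[R] M} (hπ : Function.Surjective π)
    (h : ∀ g : π.ker →ₗ[R] R, ∃ χ : P →ₗ[R] R, ∀ k, χ k.1 = g k) : IsWhitehead R M := by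
  let Q := ProjectiveResolution.of (ModuleCat.of R M)
  suffices hz : Limits.IsZero ((Q.complex.linearYonedaObj R (ModuleCat.of R R)).homology 1) from
    ModuleCat.subsingleton_of_isZero (hz.of_iso (Q.isoExt 1 (ModuleCat.of R R)))
  rw [← HomologicalComplex.exactAt_iff_isZero_homology,
    HomologicalComplex.exactAt_iff' _ 0 1 2 (by simp) (by simp), ShortComplex.moduleCat_exact_iff]
  intro (x : Q.complex.X 1 ⟶ ModuleCat.of R R) (hx : Q.complex.d 2 1 ≫ x = 0)
  let ε : Q.complex.X 0 →ₗ[R] M := (Q.π.f 0).hom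
  let d : Q.complex.X 1 →ₗ[R] Q.complex.X 0 := (Q.complex.d 1 0).hom
  have hε : Function.Surjective ε := (ModuleCat.epi_iff_surjective (Q.π.f 0)).1 inferInstance
  have : Module.Projective R (Q.complex.X 0) :=
    (IsProjective.iff_projective (Q.complex.X 0)).2 (Q.projective 0)
  have hd (y) (hy : d y = 0) : x.hom y = 0 := by
    obtain ⟨z, rfl⟩ := (ShortComplex.moduleCat_exact_iff _).1 (Q.exact_succ 0) y hy
    exact ConcreteCategory.congr_hom hx z
  have hεd (k : ε.ker) : ∃ y, d y = k := (ShortComplex.moduleCat_exact_iff _).1 Q.exact₀ k.1 k.2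
  choose s hs using hεd
  have hsd (y) (k : ε.ker) (hyk : d y = k) : x.hom (s k) = x.hom y := by
    rw [← sub_eq_zero, ← map_sub]
    exact hd _ (by rw [map_sub, hs, hyk, sub_self])
  let g : ε.ker →ₗ[R] R :=
    { toFun k := x.hom (s k)
      map_add' a b := by
        rw [← map_add]
        exact hsd _ _ (by simp [hs])
      map_smul' r a := by
        rw [RingHom.id_apply, ← map_smul]
        exact hsd _ _ (by simp [hs]) }
  obtain ⟨χ, hχ⟩ := exists_extension_of_ker_of_projective hπ hε h g
  refine ⟨(ModuleCat.ofHom χ : Q.complex.X 0 ⟶ ModuleCat.of R R), ?_⟩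
  change Q.complex.d 1 0 ≫ ModuleCat.ofHom χ = x
  ext y
  have hy : d y ∈ ε.ker := ConcreteCategory.congr_hom Q.complex_d_comp_π_f_zero y
  exact (hχ ⟨d y, hy⟩).trans (hsd y ⟨d y, hy⟩ rfl)

end Ext

section LadderModule

variable (R : Type*) [CommRing R] (p : R) {Ω S : Type*} (η : Ω → ℕ → S)

/-- The relations `p • y (δ, n + 1) = y (δ, n) - x (η δ n)`, in the free module on the `x s` and the
`y (δ, n)`. -/
noncomputable def ladderRelation (j : Ω × ℕ) : (S ⊕ Ω × ℕ) →₀ R :=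
  p • Finsupp.single (Sum.inr (j.1, j.2 + 1)) 1 - Finsupp.single (Sum.inr j) 1
    + Finsupp.single (Sum.inl (η j.1 j.2)) 1

/-- The module generated by the `x s` and the `y (δ, n)`
subject to `p • y (δ, n + 1) = y (δ, n) - x (η δ n)`. -/
abbrev LadderModule : Type _ :=
  ((S ⊕ Ω × ℕ) →₀ R) ⧸ Submodule.span R (Set.range (ladderRelation R p η))

namespace LadderModule

variable {R}

/-- The generators of `LadderModule R p η`. -/
noncomputable def gen (k : S ⊕ Ω × ℕ) : LadderModule R p η :=
  Submodule.Quotient.mk (Finsupp.single k 1)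

theorem span_range_gen : Submodule.span R (Set.range (gen p η)) = ⊤ := by
  have h : gen p η = (Submodule.mkQ _) ∘ fun k ↦ Finsupp.single k (1 : R) := rfl
  rw [h, Set.range_comp, Submodule.span_image]
  have h' : Submodule.span R (Set.range fun k : S ⊕ Ω × ℕ ↦ Finsupp.single k (1 : R)) = ⊤ := by
    simpa using (Finsupp.basisSingleOne (R := R) (ι := S ⊕ Ω × ℕ)).span_eq
  rw [h', Submodule.map_top, Submodule.range_mkQ]

theorem gen_relation (δ : Ω) (n : ℕ) :
    p • gen p η (Sum.inr (δ, n + 1)) - gen p η (Sum.inr (δ, n)) + gen p η (Sum.inl (η δ n)) = 0 :=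
  (Submodule.Quotient.mk_eq_zero _).2 (Submodule.subset_span ⟨(δ, n), rfl⟩)

variable {p η}

/-- The linear map out of a ladder module given by a solution of the relations. -/
noncomputable def lift {V : Type*} [AddCommGroup V] [Module R V] (f : S → V) (w : Ω → ℕ → V)
    (h : ∀ δ n, p • w δ (n + 1) - w δ n + f (η δ n) = 0) : LadderModule R p η →ₗ[R] V :=
  Submodule.liftQ _ (Finsupp.linearCombination R (Sum.elim f fun j ↦ w j.1 j.2)) <| by
    rw [Submodule.span_le]
    rintro _ ⟨j, rfl⟩
    simpa [ladderRelation] using h j.1 j.2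

theorem lift_gen_inr {V : Type*} [AddCommGroup V] [Module R V] (f : S → V) (w : Ω → ℕ → V)
    (h : ∀ δ n, p • w δ (n + 1) - w δ n + f (η δ n) = 0) (j : Ω × ℕ) :
    lift f w h (gen p η (Sum.inr j)) = w j.1 j.2 := by
  simp [lift, gen]

/-- With countably many `x s` but uncountably many `y (δ, 0)`, a ladder module is not free. -/
theorem not_free [IsDomain R] [Countable S] [Uncountable Ω] (hp : p ≠ 0)
    (hsep : ∀ r : R, (∀ n, p ^ n ∣ r) → r = 0) : ¬ Module.Free R (LadderModule R p η) := by
  intro hfree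
  obtain ⟨ι, B⟩ := hfree.exists_basis
  have hι : Countable ι := by
    let B₀ : Set ι := ⋃ s, ((B.repr (gen p η (Sum.inl s))).support : Set ι)
    have hB₀ : B₀.Countable := Set.countable_iUnion fun s ↦ (Finset.finite_toSet _).countable
    suffices hB : B₀ = Set.univ from Set.countable_univ_iff.1 (hB ▸ hB₀)
    refine Set.eq_univ_of_forall fun i ↦ ?_
    by_contra hi
    have hx (s) : B.coord i (gen p η (Sum.inl s)) = 0 := by
      by_contra h
      exact hi (Set.mem_iUnion.2 ⟨s, by simpa using h⟩)
    have hstep (δ n) : B.coord i (gen p η (Sum.inr (δ, n)))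
        = p * B.coord i (gen p η (Sum.inr (δ, n + 1))) := by
      have := congrArg (B.coord i) (gen_relation p η δ n)
      rw [map_add, map_sub, map_smul, hx, map_zero, add_zero, smul_eq_mul] at this
      exact (sub_eq_zero.1 this).symm
    have hy (k : ℕ) (δ n) : p ^ k ∣ B.coord i (gen p η (Sum.inr (δ, n))) := by
      induction k generalizing n with
      | zero => simp
      | succ k ih =>
        rw [hstep, pow_succ']
        exact mul_dvd_mul_left _ (ih _)
    have h0 : B.coord i = 0 := by
      refine LinearMap.ext_on_range (span_range_gen p η) ?_
      rintro (s | ⟨δ, n⟩)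
      · exact hx s
      · exact hsep _ fun k ↦ hy k δ n
    simpa using LinearMap.congr_fun h0 (B i)
  let K := FractionRing R
  have hpK : algebraMap R K p ≠ 0 := by simpa using hp
  let ψ : LadderModule R p η →ₗ[R] (Ω →₀ K) :=
    lift 0 (fun δ n ↦ Finsupp.single δ ((algebraMap R K p)⁻¹ ^ n)) fun δ n ↦ by
      rw [Pi.zero_apply, add_zero, sub_eq_zero, Finsupp.smul_single, Algebra.smul_def, pow_succ',
        mul_inv_cancel_left₀ hpK]
  let U : Set Ω := ⋃ i, ((ψ (B i)).support : Set Ω)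
  have hU : U.Countable := Set.countable_iUnion fun i ↦ (Finset.finite_toSet _).countable
  have hψ (m) : ψ m ∈ Finsupp.supported K R U := by
    have hB : Submodule.span R (Set.range B) ≤ (Finsupp.supported K R U).comap ψ := by
      rw [Submodule.span_le]
      rintro _ ⟨i, rfl⟩
      exact Set.subset_iUnion (fun i ↦ ((ψ (B i)).support : Set Ω)) i
    exact hB (B.span_eq ▸ Submodule.mem_top)
  refine Set.not_countable_univ (hU.mono fun δ _ ↦ hψ (gen p η (Sum.inr (δ, 0))) ?_)
  rw [lift_gen_inr]
  simp

end LadderModule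

/-- A ladder module is a Whitehead module if the corresponding systems of equations are solvable. -/
theorem LadderModule.isWhitehead {R : Type u} [CommRing R] {p : R} {Ω S : Type u} {η : Ω → ℕ → S}
    (h : ∀ c : Ω → ℕ → R, ∃ (f : S → R) (w : Ω → ℕ → R),
      ∀ δ n, p * w δ (n + 1) - w δ n + f (η δ n) = c δ n) :
    IsWhitehead R (LadderModule R p η) := by
  let N := Submodule.span R (Set.range (ladderRelation R p η))
  refine isWhitehead_of_forall_exists_extension N.mkQ_surjective fun g ↦ ?_
  have hmem (j) : ladderRelation R p η j ∈ N.mkQ.ker := by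
    rw [Submodule.ker_mkQ]
    exact Submodule.subset_span ⟨j, rfl⟩
  obtain ⟨f, w, hfw⟩ := h fun δ n ↦ g ⟨_, hmem (δ, n)⟩
  let χ := Finsupp.linearCombination R (Sum.elim f fun j : Ω × ℕ ↦ w j.1 j.2)
  refine ⟨χ, ?_⟩
  rintro ⟨k, hk⟩
  have hk' : k ∈ N := by rwa [Submodule.ker_mkQ] at hk
  induction hk' using Submodule.span_induction with
  | mem _ hx =>
    obtain ⟨j, rfl⟩ := hx
    simpa [χ, ladderRelation] using hfw j.1 j.2
  | zero => exact (map_zero χ).trans (map_zero g).symm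
  | add a b ha hb iha ihb =>
    have ha' : a ∈ N.mkQ.ker := by rwa [Submodule.ker_mkQ]
    have hb' : b ∈ N.mkQ.ker := by rwa [Submodule.ker_mkQ]
    exact (map_add χ a b).trans
      ((congrArg₂ _ (iha ha') (ihb hb')).trans (map_add g ⟨a, ha'⟩ ⟨b, hb'⟩).symm)
  | smul r a ha iha =>
    have ha' : a ∈ N.mkQ.ker := by rwa [Submodule.ker_mkQ]
    exact (map_smul χ r a).trans
      ((congrArg _ (iha ha')).trans (map_smul g r ⟨a, ha'⟩).symm)

/-- The number of generators of a ladder module. -/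
theorem LadderModule.isGenerated {R : Type u} [CommRing R] {p : R} {Ω S : Type u} {η : Ω → ℕ → S}
    {κ : Cardinal.{u}} (hκ : ℵ₀ ≤ κ) (hS : #S ≤ κ) (hΩ : #Ω ≤ κ) :
    IsGenerated R (LadderModule R p η) κ := by
  refine ⟨Set.range (gen p η), mk_range_le.trans ?_, span_range_gen p η⟩
  rw [mk_sum, mk_prod, Cardinal.lift_id, Cardinal.lift_id]
  refine add_le_of_le hκ hS ((mul_le_max _ _).trans (max_le (max_le ?_ ?_) hκ)) <;> simpa

end LadderModule

section Derivations

/-- A derivation on a domain extends to its field of fractions. -/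
theorem Derivation.exists_extend_fractionRing {A F : Type*} [CommRing A] [Field F]
    [Algebra A F] [IsFractionRing A F] (d : Derivation ℤ A F) :
    ∃ D : Derivation ℤ F F, ∀ a, D (algebraMap A F a) = d a := by
  let Φ : A →+* TrivSqZeroExt F F :=
    { toFun a := TrivSqZeroExt.inl (algebraMap A F a) + TrivSqZeroExt.inr (d a)
      map_zero' := by simp
      map_one' := by simp
      map_add' a b := by
        rw [map_add, map_add, TrivSqZeroExt.inl_add, TrivSqZeroExt.inr_add, add_add_add_comm]
      map_mul' a b := by
        ext
        · simp
        · rw [d.leibniz, Algebra.smul_def, Algebra.smul_def]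
          simp [mul_comm (d a)] }
  have hΦ (a : nonZeroDivisors A) : IsUnit (Φ a) :=
    TrivSqZeroExt.isUnit_iff_isUnit_fst.2 (by simpa [Φ] using IsLocalization.map_units F a)
  let Ψ : F →+* TrivSqZeroExt F F := IsLocalization.lift hΦ
  have hΨ (a : A) : Ψ (algebraMap A F a) = Φ a := IsLocalization.lift_eq hΦ a
  have hfst (x : F) : (Ψ x).fst = x := by
    have : ((TrivSqZeroExt.fstHom F F F : TrivSqZeroExt F F →+* F).comp Ψ) = RingHom.id F :=
      IsLocalization.ringHom_ext (nonZeroDivisors A) <| RingHom.ext fun a ↦ by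
        change (Ψ (algebraMap A F a)).fst = _
        simp [hΨ, Φ]
    exact RingHom.congr_fun this x
  refine ⟨Derivation.mk' (AddMonoidHom.toIntLinearMap
    { toFun x := (Ψ x).snd, map_zero' := by simp, map_add' := by simp }) fun a b ↦ ?_, fun a ↦ ?_⟩
  · simp [hfst, mul_comm (Ψ a).snd]
  · change (Ψ (algebraMap A F a)).snd = _
    simp [hΨ, Φ]

/-- The coefficientwise extension of a derivation to power series. -/
noncomputable def PowerSeries.mapDerivation {F : Type*} [CommRing F] (d : Derivation ℤ F F) :
    Derivation ℤ (PowerSeries F) (PowerSeries F) :=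
  Derivation.mk' (AddMonoidHom.toIntLinearMap
    { toFun w := PowerSeries.mk fun n ↦ d (PowerSeries.coeff n w)
      map_zero' := by ext; simp
      map_add' a b := by ext; simp }) fun a b ↦ by
    ext n
    change PowerSeries.coeff n (PowerSeries.mk fun n ↦ d (PowerSeries.coeff n (a * b))) =
      PowerSeries.coeff n (a * (PowerSeries.mk fun n ↦ d (PowerSeries.coeff n b)) +
        b * (PowerSeries.mk fun n ↦ d (PowerSeries.coeff n a)))
    simp only [PowerSeries.coeff_mk, map_add, smul_eq_mul, PowerSeries.coeff_mul, map_sum,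
      Derivation.leibniz, Finset.sum_add_distrib, add_right_inj]
    exact Finset.Nat.sum_antidiagonal_swap (n := n)
      (f := fun ij ↦ PowerSeries.coeff ij.1 b * d (PowerSeries.coeff ij.2 a))

theorem PowerSeries.coeff_mapDerivation {F : Type*} [CommRing F] (d : Derivation ℤ F F)
    (w : PowerSeries F) (n : ℕ) :
    PowerSeries.coeff n (PowerSeries.mapDerivation d w) = d (PowerSeries.coeff n w) :=
  PowerSeries.coeff_mk n fun n ↦ d (PowerSeries.coeff n w)

/-- The elements annihilated by a derivation. -/
def Derivation.constants {k W V : Type*} [CommRing k] [CommRing W] [Algebra k W] [AddCommGroup V]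
    [Module W V] [Module k V] (D : Derivation k W V) : Subring W where
  carrier := {w | D w = 0}
  zero_mem' := map_zero D
  one_mem' := D.map_one_eq_zero
  add_mem' ha hb := by simp_all
  neg_mem' ha := by simp_all
  mul_mem' ha hb := by simp_all

namespace Derivation

variable {k W V : Type*} [CommRing k] [CommRing W] [IsDomain W] [Algebra k W] [AddCommGroup V]
  [Module W V] [Module k V] [Module.IsTorsionFree W V] {D : Derivation k W V}

theorem apply_eq_zero_of_mul {a b : W} (ha : D a = 0) (ha0 : a ≠ 0) (hab : D (a * b) = 0) :
    D b = 0 := by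
  rw [D.leibniz, ha, smul_zero, add_zero] at hab
  exact (smul_eq_zero.1 hab).resolve_left ha0

theorem isUnit_constants_iff {u : D.constants} : IsUnit u ↔ IsUnit (u : W) := by
  refine ⟨fun h ↦ h.map D.constants.subtype, fun h ↦ ?_⟩
  obtain ⟨v, hv⟩ := h.exists_right_inv
  have : D v = 0 := apply_eq_zero_of_mul u.2 h.ne_zero (by rw [hv, D.map_one_eq_zero])
  exact IsUnit.of_mul_eq_one ⟨v, this⟩ (Subtype.ext hv)

variable {ϖ : D.constants}

theorem irreducible_constants (hϖ : Irreducible (ϖ : W)) : Irreducible ϖ := by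
  refine ⟨fun h ↦ hϖ.not_isUnit (isUnit_constants_iff.1 h), fun a b hab ↦ ?_⟩
  rw [isUnit_constants_iff, isUnit_constants_iff]
  exact hϖ.isUnit_or_isUnit (congrArg Subtype.val hab)

theorem pow_dvd_of_pow_dvd_coe (hϖ : Irreducible (ϖ : W)) {n : ℕ} {r : D.constants}
    (h : (ϖ : W) ^ n ∣ r) : ϖ ^ n ∣ r := by
  obtain ⟨b, hb⟩ := h
  have : D b = 0 :=
    apply_eq_zero_of_mul (ϖ ^ n).2 (pow_ne_zero _ hϖ.ne_zero) (by
      rw [SubmonoidClass.coe_pow, ← hb]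
      exact r.2)
  exact ⟨⟨b, this⟩, Subtype.ext hb⟩

theorem isDiscreteValuationRing_constants [IsDiscreteValuationRing W]
    (hϖ : Irreducible (ϖ : W)) : IsDiscreteValuationRing D.constants := by
  refine IsDiscreteValuationRing.ofHasUnitMulPowIrreducibleFactorization
    ⟨ϖ, irreducible_constants hϖ, fun {r} hr ↦ ?_⟩
  have hr' : (r : W) ≠ 0 := by simpa using hr
  obtain ⟨n, u, hu⟩ := IsDiscreteValuationRing.associated_pow_irreducible hr' hϖ
  obtain ⟨b, hb⟩ := pow_dvd_of_pow_dvd_coe hϖ ⟨↑u⁻¹, by rw [← hu, Units.mul_inv_cancel_right]⟩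
  have hb' : (r : W) = (ϖ : W) ^ n * b := congrArg Subtype.val hb
  have hbu : (b : W) * u = 1 := by
    refine mul_left_cancel₀ (pow_ne_zero n hϖ.ne_zero) ?_
    rw [← mul_assoc, ← hb', hu, mul_one]
  have hbunit : IsUnit b := isUnit_constants_iff.2 (IsUnit.of_mul_eq_one _ hbu)
  exact ⟨n, hbunit.unit, hb.symm⟩

end Derivation

end Derivations

section Functional

/-- The first `n` values of `b`. -/
def branchTake (b : ℕ → Bool) (n : ℕ) : List Bool := (List.range n).map b

theorem length_branchTake (b : ℕ → Bool) (n : ℕ) : (branchTake b n).length = n := by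
  simp [branchTake]

theorem branchTake_inj {b b' : ℕ → Bool} {n n' : ℕ} :
    branchTake b n = branchTake b' n' ↔ n = n' ∧ ∀ k < n, b k = b' k := by
  constructor
  · intro h
    have hn : n = n' := by simpa [length_branchTake] using congrArg List.length h
    subst hn
    exact ⟨rfl, by simpa [branchTake] using h⟩
  · rintro ⟨rfl, h⟩
    simpa [branchTake] using h

/-- The family of vectors attached to branches is linearly independent modulo finitely supported
vectors, so a linear functional can be prescribed on it while vanishing on the coordinate
vectors. -/
theorem exists_linearMap_branch {K Ω I : Type*} [Field K] {x : K} (hx : x ≠ 0)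
    {b : Ω → ℕ → Bool} (hb : Function.Injective b) (g : Ω × I → List Bool × I → K)
    (hg : ∀ δ i δ' n i', g (δ, i) (branchTake (b δ') n, i') =
      open Classical in if i' = i ∧ branchTake (b δ') n = branchTake (b δ) n then x ^ n else 0)
    (v : Ω × I → K) :
    ∃ ℓ : (List Bool × I → K) →ₗ[K] K,
      (∀ f : List Bool × I → K, f.support.Finite → ℓ f = 0) ∧ ∀ j, ℓ (g j) = v j := by
  classical
  let N : Submodule K (List Bool × I → K) :=
    { carrier := {f | f.support.Finite}
      zero_mem' := by simp
      add_mem' ha hb := (ha.union hb).subset (Function.support_add _ _)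
      smul_mem' c f hf := hf.subset (Function.support_const_smul_subset c f) }
  let T : (Ω × I →₀ K) →ₗ[K] (List Bool × I → K) ⧸ N :=
    N.mkQ ∘ₗ Finsupp.linearCombination K g
  have hT : LinearMap.ker T = ⊥ := by
    rw [LinearMap.ker_eq_bot']
    intro l hl
    have hfin : (Finsupp.linearCombination K g l).support.Finite :=
      (Submodule.Quotient.mk_eq_zero N).1 hl
    ext ⟨δ, i⟩
    rw [Finsupp.zero_apply]
    have h1 : ∀ᶠ n in Filter.atTop,
        Finsupp.linearCombination K g l (branchTake (b δ) n, i) = 0 := by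
      have hinj : Function.Injective fun n ↦ (branchTake (b δ) n, i) := fun m n h ↦
        (branchTake_inj.1 (congrArg Prod.fst h)).1
      have := hfin.preimage hinj.injOn
      rw [← Nat.cofinite_eq_atTop]
      exact this.eventually_cofinite_notMem.mono fun n hn ↦ by simpa using hn
    have h2 : ∀ᶠ n in Filter.atTop, ∀ j ∈ l.support, j.1 ≠ δ →
        branchTake (b δ) n ≠ branchTake (b j.1) n := by
      rw [Filter.eventually_all_finset]
      intro j _
      by_cases hj : j.1 = δ
      · simp [hj]
      obtain ⟨k, hk⟩ := Function.ne_iff.1 (hb.ne hj)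
      filter_upwards [Filter.eventually_gt_atTop k] with n hn _ h
      exact hk ((branchTake_inj.1 h).2 k hn).symm
    obtain ⟨n, hn1, hn2⟩ := (h1.and h2).exists
    rw [Finsupp.linearCombination_apply, Finsupp.sum, Finset.sum_apply,
      Finset.sum_eq_single (δ, i)] at hn1
    · simpa [hg, hx] using hn1
    · rintro ⟨δ', i'⟩ hj hne
      rw [Pi.smul_apply, hg, if_neg, smul_zero]
      rintro ⟨rfl, h⟩
      exact hn2 _ hj (fun h' ↦ hne (by rw [← h'])) h
    · intro h
      simp [Finsupp.notMem_support_iff.1 h]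
  obtain ⟨s, hs⟩ := T.exists_leftInverse_of_injective hT
  refine ⟨Finsupp.linearCombination K v ∘ₗ s ∘ₗ N.mkQ, fun f hf ↦ ?_, fun j ↦ ?_⟩
  · have : N.mkQ f = 0 := (Submodule.Quotient.mk_eq_zero N).2 hf
    simp [this]
  · have : N.mkQ (g j) = T (Finsupp.single j 1) := by simp [T]
    have h' : s (T (Finsupp.single j 1)) = Finsupp.single j 1 := LinearMap.congr_fun hs _
    simp [this, h']

end Functional

section LargeRing

open PowerSeries

/-- A field of rational functions, with its partial derivatives. -/
theorem exists_field_with_partial_derivatives (σ : Type u) [Nonempty σ] :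
    ∃ (F : Type u) (_ : Field F) (z : σ → F) (d : σ → Derivation ℤ F F),
      #F ≤ max #σ ℵ₀ ∧ (∀ s, d s (z s) = 1) ∧ ∀ s t, s ≠ t → d s (z t) = 0 := by
  classical
  have key (F : Type u) [Field F] [Algebra (MvPolynomial σ ℚ) F]
      [IsFractionRing (MvPolynomial σ ℚ) F] (s : σ) : ∃ d : Derivation ℤ F F,
      ∀ t, d (algebraMap _ _ (MvPolynomial.X t : MvPolynomial σ ℚ)) = if s = t then 1 else 0 := by
    algebraize [(algebraMap (MvPolynomial σ ℚ) F).comp (algebraMap ℚ (MvPolynomial σ ℚ))]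
    let d₀ : Derivation ℚ (MvPolynomial σ ℚ) F :=
      MvPolynomial.mkDerivation ℚ fun t ↦ if s = t then 1 else 0
    obtain ⟨d, hd⟩ := Derivation.exists_extend_fractionRing (d₀.restrictScalars ℤ)
    exact ⟨d, fun t ↦ (hd _).trans (MvPolynomial.mkDerivation_X ℚ _ t)⟩
  choose d hd using key (FractionRing (MvPolynomial σ ℚ))
  refine ⟨_, _, _, d, ?_, fun s ↦ (hd s s).trans (if_pos rfl),
    fun s t hst ↦ (hd s t).trans (if_neg hst)⟩
  rw [IsFractionRing.cardinalMk (MvPolynomial σ ℚ), MvPolynomial.cardinalMk_eq_max_lift]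
  simp [le_total]

/-- There are derivations of a power series ring over a field with enough partial derivatives
which annihilate the variables and take prescribed values on the power series attached to
branches. -/
theorem exists_derivation_branch {F K Ω I : Type*} [Field F] [Field K]
    [Algebra F⟦X⟧ K] [IsFractionRing F⟦X⟧ K] {z : List Bool × I → F}
    {d : List Bool × I → Derivation ℤ F F}
    (hd_self : ∀ s, d s (z s) = 1) (hd_ne : ∀ s t, s ≠ t → d s (z t) = 0)
    {b : Ω → ℕ → Bool} (hb : Function.Injective b) (v : Ω × I → K) :
    ∃ D : Derivation ℤ F⟦X⟧ K, D X = 0 ∧ (∀ t, D (C (z t)) = 0) ∧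
      ∀ δ i, D (PowerSeries.mk fun n ↦ z (branchTake (b δ) n, i)) = v (δ, i) := by
  classical
  have hd (s t) : d s (z t) = if s = t then 1 else 0 := by
    split_ifs with h
    · rw [h, hd_self]
    · exact hd_ne s t h
  let E : Derivation ℤ F⟦X⟧ (List Bool × I → K) :=
    Derivation.mk' (LinearMap.pi fun s ↦
      (Algebra.linearMap F⟦X⟧ K).restrictScalars ℤ ∘ₗ (mapDerivation (d s)).toLinearMap)
      fun a b ↦ by
        ext s
        simp [Algebra.smul_def]
  have hE (w : F⟦X⟧) (s) : E w s = algebraMap F⟦X⟧ K (mapDerivation (d s) w) := rfl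
  have hx : algebraMap F⟦X⟧ K X ≠ 0 := by simp [X_ne_zero]
  obtain ⟨ℓ, hℓ, hℓv⟩ := exists_linearMap_branch hx hb
    (fun j ↦ E (PowerSeries.mk fun n ↦ z (branchTake (b j.1) n, j.2))) (fun δ i δ' n i' ↦ by
      rw [hE]
      split_ifs with h
      · rw [← map_pow]
        congr 1
        ext m
        rw [coeff_mapDerivation, coeff_mk, hd, coeff_X_pow]
        refine if_congr ?_ rfl rfl
        rw [h.1, h.2, Prod.mk.injEq, branchTake_inj]
        simp [eq_comm]
      · rw [← map_zero (algebraMap F⟦X⟧ K)]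
        congr 1
        ext m
        rw [coeff_mapDerivation, coeff_mk, hd, if_neg, map_zero]
        rintro h'
        rw [Prod.mk.injEq] at h'
        have hnm := (branchTake_inj.1 h'.1).1
        exact h ⟨h'.2, hnm ▸ h'.1⟩) v
  refine ⟨Derivation.mk' (ℓ.restrictScalars ℤ ∘ₗ E.toLinearMap) fun a b ↦ ?_, ?_, fun t ↦ ?_,
    fun δ i ↦ hℓv (δ, i)⟩
  · have hℓs (w : F⟦X⟧) (f : List Bool × I → K) : ℓ (w • f) = w • ℓ f :=
      (ℓ.restrictScalars F⟦X⟧).map_smul w f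
    change ℓ (E (a * b)) = a • ℓ (E b) + b • ℓ (E a)
    rw [E.leibniz, map_add, hℓs, hℓs]
  · refine hℓ _ ?_
    have : E X = 0 := by
      ext s
      rw [hE, Pi.zero_apply, ← map_zero (algebraMap F⟦X⟧ K)]
      congr 1
      ext m
      rw [coeff_mapDerivation, coeff_X, map_zero]
      split_ifs <;> simp
    simp [this]
  · refine hℓ _ ((Set.finite_singleton t).subset fun s hs ↦ ?_)
    by_contra hst
    refine hs ((hE _ s).trans ?_)
    rw [← map_zero (algebraMap F⟦X⟧ K)]
    congr 1
    ext m
    rw [coeff_mapDerivation, coeff_C, map_zero]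
    split_ifs
    · rw [hd, if_neg (by simpa using hst)]
    · simp

/-- The sum of the series `∑ X ^ k * c k`. -/
noncomputable def PowerSeries.powSum {F : Type*} [CommRing F] (c : ℕ → F⟦X⟧) : F⟦X⟧ :=
  PowerSeries.mk fun m ↦ ∑ k ∈ Finset.range (m + 1), coeff (m - k) (c k)

theorem PowerSeries.powSum_eq {F : Type*} [CommRing F] (c : ℕ → F⟦X⟧) :
    powSum c = c 0 + X * powSum fun k ↦ c (k + 1) := by
  ext m
  cases m with
  | zero => simp [powSum]
  | succ m =>
    rw [map_add, coeff_succ_X_mul, powSum, powSum, coeff_mk, coeff_mk, Finset.sum_range_succ']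
    simp [add_comm]

theorem PowerSeries.powSum_C_sub {F : Type*} [CommRing F] (f : ℕ → F) (c : ℕ → F⟦X⟧) :
    (powSum fun k ↦ C (f k) - c k) = PowerSeries.mk f - powSum c := by
  ext m
  simp only [powSum, coeff_mk, map_sub, Finset.sum_sub_distrib, sub_left_inj]
  rw [Finset.sum_range_succ, Finset.sum_eq_zero]
  · simp
  · intro k hk
    rw [coeff_C, if_neg]
    rw [Finset.mem_range] at hk
    omega

theorem PowerSeries.X_pow_dvd_mk_sub {F : Type*} [CommRing F] (f : ℕ → F) {n j : ℕ} (h : n ≤ j) :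
    X ^ n ∣ PowerSeries.mk f - ∑ k ∈ Finset.range j, C (f k) * X ^ k := by
  rw [X_pow_dvd_iff]
  intro m hm
  simp [coeff_X_pow, hm.trans_le h]

theorem PowerSeries.cardinalMk_le {F : Type u} [CommRing F] : #F⟦X⟧ ≤ #F ^ ℵ₀ := by
  have : Function.Injective fun (w : F⟦X⟧) (n : ℕ) ↦ coeff n w := fun a b h ↦
    PowerSeries.ext fun n ↦ congrFun h n
  simpa using mk_le_of_injective this

/-- The main construction: the ring of constants of a suitable derivation on a power series ring. -/
theorem exists_large_pid_of_derivation {F K Ω I : Type} [Field F] [Field K]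
    [Algebra F⟦X⟧ K] [IsFractionRing F⟦X⟧ K] {z : List Bool × I → F}
    (hz : Function.Injective z) (hΩ : #Ω = aleph 1) (hF : #F⟦X⟧ ≤ 2 ^ aleph 1)
    (hI : 2 ^ aleph 1 ≤ #I) {b : Ω → ℕ → Bool} {D : Derivation ℤ F⟦X⟧ K} (hX : D X = 0)
    (hDz : ∀ t, D (C (z t)) = 0) (hD : ∀ v : Ω → K, ∃ i, ∀ δ,
      D (PowerSeries.mk fun n ↦ z (branchTake (b δ) n, i)) = v δ) :
    ∃ (R : Type) (_ : CommRing R) (p : R),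
      IsDomain R ∧ IsPrincipalIdealRing R ∧ ¬ IsField R ∧
      ∃ _ : IsLocalRing R, Prime p ∧ IsLocalRing.maximalIdeal R = Ideal.span {p} ∧
      NotPAdicComplete R p ∧
      #R = 2 ^ aleph 1 ∧
      ∃ (M : Type) (_ : AddCommGroup M) (_ : Module R M),
        IsGenerated R M (aleph 1) ∧ IsWhitehead R M ∧ ¬ Module.Free R M := by
  let p : D.constants := ⟨X, hX⟩
  have hirr : Irreducible (p : F⟦X⟧) := X_irreducible
  have hdvr : IsDiscreteValuationRing D.constants := D.isDiscreteValuationRing_constants hirr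
  have hp : Irreducible p := D.irreducible_constants hirr
  have hsepF (w : F⟦X⟧) (hw : ∀ n, X ^ n ∣ w) : w = 0 := by
    ext n
    exact X_pow_dvd_iff.1 (hw (n + 1)) n n.lt_succ_self
  have hcoe {n : ℕ} {r : D.constants} (h : p ^ n ∣ r) : X ^ n ∣ (r : F⟦X⟧) :=
    map_dvd D.constants.subtype h
  have hsep (r : D.constants) (hr : ∀ n, p ^ n ∣ r) : r = 0 :=
    Subtype.ext (hsepF _ fun n ↦ hcoe (hr n))
  have hunc : Uncountable Ω := by
    rw [← aleph0_lt_mk_iff, hΩ]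
    exact aleph0_lt_aleph_one
  refine ⟨D.constants, inferInstance, p, inferInstance, inferInstance,
    IsDiscreteValuationRing.not_isField _, inferInstance, hp.prime, hp.maximalIdeal_eq, ?_, ?_,
    LadderModule D.constants p fun δ n ↦ branchTake (b δ) n, inferInstance, inferInstance,
    LadderModule.isGenerated (aleph0_le_aleph 1) (mk_le_aleph0.trans (aleph0_le_aleph 1)) hΩ.le,
    LadderModule.isWhitehead fun c ↦ ?_, LadderModule.not_free hp.ne_zero hsep⟩
  · obtain ⟨i, hi⟩ := hD 1
    obtain ⟨δ⟩ : Nonempty Ω := inferInstance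
    let f : ℕ → F := fun n ↦ z (branchTake (b δ) n, i)
    let a (j : ℕ) : D.constants :=
      ∑ k ∈ Finset.range j, (⟨C (f k), hDz _⟩ : D.constants) * p ^ k
    have ha (j) : (a j : F⟦X⟧) = ∑ k ∈ Finset.range j, C (f k) * X ^ k := by simp [a, p]
    have hya {n j : ℕ} (h : n ≤ j) : X ^ n ∣ PowerSeries.mk f - (a j : F⟦X⟧) := by
      rw [ha]
      exact X_pow_dvd_mk_sub f h
    refine ⟨a, fun n ↦ ⟨n, fun j hj k hk ↦ D.pow_dvd_of_pow_dvd_coe hirr ?_⟩, fun L hL ↦ ?_⟩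
    · simpa using dvd_sub (hya hk) (hya hj)
    · have hyL : PowerSeries.mk f - (L : F⟦X⟧) = 0 := hsepF _ fun n ↦ by
        obtain ⟨N, hN⟩ := hL n
        simpa using dvd_add (hya (le_max_left n N)) (hcoe (hN _ (le_max_right n N)))
      have h1 : D (PowerSeries.mk f) = 1 := hi δ
      rw [sub_eq_zero.1 hyL] at h1
      exact zero_ne_one (L.2.symm.trans h1)
  · refine le_antisymm ((mk_subtype_le _).trans hF) (hI.trans ?_)
    refine mk_le_of_injective
      (f := fun i ↦ (⟨C (z ([], i)), hDz _⟩ : D.constants)) fun i j h ↦ ?_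
    exact (Prod.mk.inj (hz (C_injective (congrArg Subtype.val h)))).2
  · obtain ⟨i, hi⟩ := hD fun δ ↦ D (powSum fun n ↦ (c δ n : F⟦X⟧))
    let w (δ : Ω) (n : ℕ) : F⟦X⟧ :=
      powSum fun k ↦ C (z (branchTake (b δ) (n + k), i)) - (c δ (n + k) : F⟦X⟧)
    have hw (δ n) : w δ n = C (z (branchTake (b δ) n, i)) - (c δ n : F⟦X⟧) + X * w δ (n + 1) := by
      simp only [w]
      rw [powSum_eq]
      simp only [add_zero, add_assoc, add_comm 1]
    have hDw (δ n) : D (w δ n) = 0 := by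
      induction n with
      | zero =>
        simp only [w, zero_add]
        rw [powSum_C_sub (fun k ↦ z (branchTake (b δ) k, i)) fun k ↦ (c δ k : F⟦X⟧), map_sub,
          hi, sub_self]
      | succ n ih =>
        refine D.apply_eq_zero_of_mul hX X_ne_zero ?_
        have hc : D (c δ n : F⟦X⟧) = 0 := (c δ n).2
        rw [hw, map_add, map_sub, hDz, hc, sub_zero, zero_add] at ih
        exact ih
    refine ⟨fun s ↦ ⟨C (z (s, i)), hDz _⟩, fun δ n ↦ ⟨w δ n, hDw δ n⟩, fun δ n ↦ Subtype.ext ?_⟩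
    change X * w δ (n + 1) - w δ n + C (z (branchTake (b δ) n, i)) = (c δ n : F⟦X⟧)
    rw [hw δ n]
    ring

end LargeRing

/-- Eklof–Shelah, Theorem 1, second assertion: there is a slender
(local, not `p`-adically complete) p.i.d. `R` of cardinality `2 ^ ℵ₁` admitting an
`ℵ₁`-generated Whitehead `R`-module which is not free. -/
theorem exists_large_pid_with_nonfree_whitehead_module :
    ∃ (R : Type) (_ : CommRing R) (p : R),
      IsDomain R ∧ IsPrincipalIdealRing R ∧ ¬ IsField R ∧
      ∃ _ : IsLocalRing R, Prime p ∧ IsLocalRing.maximalIdeal R = Ideal.span {p} ∧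
      NotPAdicComplete R p ∧
      #R = 2 ^ aleph 1 ∧
      ∃ (M : Type) (_ : AddCommGroup M) (_ : Module R M),
        IsGenerated R M (aleph 1) ∧ IsWhitehead R M ∧ ¬ Module.Free R M := by
  let Ω : Type := (aleph 1).out
  let I : Type := Set Ω
  have hΩ : #Ω = aleph 1 := mk_out _
  have hI : #I = 2 ^ aleph 1 := by rw [mk_set, hΩ]
  have hle : ℵ₀ ≤ (2 : Cardinal.{0}) ^ aleph 1 := (aleph0_le_aleph 1).trans (cantor _).le
  obtain ⟨b, hb⟩ : ∃ b : Ω → ℕ → Bool, Function.Injective b := by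
    obtain ⟨e⟩ : #Ω ≤ #(ℕ → Bool) := by
      rw [hΩ]
      simpa using aleph_one_le_continuum
    exact ⟨e, e.injective⟩
  obtain ⟨F, _, z, d, hF, hd_self, hd_ne⟩ := exists_field_with_partial_derivatives (List Bool × I)
  have hFX : #(PowerSeries F) ≤ 2 ^ aleph 1 := by
    refine PowerSeries.cardinalMk_le.trans ?_
    have hF' : #F ≤ 2 ^ aleph 1 := by
      refine hF.trans (max_le ?_ hle)
      rw [mk_prod, Cardinal.lift_id, Cardinal.lift_id, hI]
      exact (mul_le_max _ _).trans (max_le (max_le (mk_le_aleph0.trans hle) le_rfl) hle)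
    refine (power_le_power_right hF').trans ?_
    rw [← power_mul, mul_eq_left (aleph0_le_aleph 1) (aleph0_le_aleph 1) aleph0_ne_zero]
  let K := FractionRing (PowerSeries F)
  obtain ⟨e⟩ : #(Ω → K) ≤ #I := by
    rw [hI, ← power_def, hΩ, IsFractionRing.cardinalMk (PowerSeries F)]
    refine (power_le_power_right hFX).trans ?_
    rw [← power_mul, mul_eq_self (aleph0_le_aleph 1)]
  obtain ⟨D, hX, hDz, hD⟩ := exists_derivation_branch hd_self hd_ne hb
    fun j : Ω × I ↦ (Function.invFun e j.2 j.1 : K)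
  have hz : Function.Injective z := fun s t hst ↦ by
    by_contra hne
    exact zero_ne_one ((hd_ne s t hne).symm.trans (hst ▸ hd_self s))
  refine exists_large_pid_of_derivation hz hΩ hFX hI.ge hX hDz (b := b) fun v ↦ ?_
  obtain ⟨i, hi⟩ := Function.invFun_surjective e.injective v
  exact ⟨i, fun δ ↦ (hD δ i).trans (congrFun hi δ)⟩
end

section
/- There exists a commutative ring R such that: R is a principal ideal domain (and not a field); R has cardinality ℵ₂; and every ℵ₁-generated R-module M which is a Whitehead module (Ext¹_R(M, R) = 0) is a free R-module. -/
/-!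
Statement 0 (Eklof–Shelah, "Whitehead modules over large principal ideal domains",
Theorem 1): There is a slender (local, not `p`-adically complete) p.i.d. `R` of
cardinality `2 ^ ℵ₁` such that every `ℵ₁`-free `ℵ₁`-generated `R`-module is a
Whitehead module.
-/

open Cardinal

universe u

open CategoryTheory Polynomial

/-- A submodule of a free module over a principal ideal domain has a basis indexed by a subset of
the index set of the ambient basis. -/
theorem Submodule.exists_basis_subset_of_pid {R ι : Type*} [CommRing R] [IsDomain R]
    [IsPrincipalIdealRing R] (N : Submodule R (ι →₀ R)) :
    ∃ J : Set ι, Nonempty (Module.Basis J R N) := by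
  classical
  obtain ⟨_, _⟩ := exists_wellFoundedLT ι
  let L (i : ι) : Submodule R (ι →₀ R) :=
    N ⊓ ⨅ j : Set.Ioi i, LinearMap.ker (Finsupp.lapply (R := R) (M := R) (j : ι))
  have mem_L (i : ι) (x : ι →₀ R) : x ∈ L i ↔ x ∈ N ∧ ∀ j, i < j → x j = 0 := by
    simp [L, Submodule.mem_iInf]
  let A (i : ι) : Ideal R := (L i).map (Finsupp.lapply i)
  let a (i : ι) : R := Submodule.IsPrincipal.generator (A i)
  have exists_v (i : ι) : ∃ v ∈ L i, v i = a i := by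
    exact Submodule.IsPrincipal.generator_mem (A i)
  choose v hvL hva using exists_v
  have hvN (i : ι) : v i ∈ N := ((mem_L i _).1 (hvL i)).1
  have hv_gt {i j : ι} (h : i < j) : v i j = 0 := ((mem_L i _).1 (hvL i)).2 j h
  let J : Set ι := {i | a i ≠ 0}
  let w (i : J) : ι →₀ R := v i
  have hli : LinearIndependent R w := by
    rw [linearIndependent_iff]
    intro l hl
    by_contra hne
    have hsupp : l.support.Nonempty := Finsupp.support_nonempty_iff.2 hne
    obtain ⟨m, hm, hmax⟩ := l.support.exists_max_image (fun i : J => (i : ι)) hsupp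
    have h0 : (l.sum fun i c => c • v i) (m : ι) = 0 := by
      rw [Finsupp.linearCombination_apply] at hl
      exact DFunLike.congr_fun hl (m : ι)
    rw [Finsupp.sum, Finsupp.finsetSum_apply, Finset.sum_eq_single m] at h0
    · rw [Finsupp.smul_apply, hva, smul_eq_mul] at h0
      exact (mul_ne_zero (Finsupp.mem_support_iff.1 hm) m.2) h0
    · intro i hi him
      have : (i : ι) < m := lt_of_le_of_ne (hmax i hi) fun h => him (Subtype.ext h)
      simp [hv_gt this]
    · exact fun h => absurd hm h
  have key (i : ι) : ∀ x ∈ N, (∀ j, i < j → x j = 0) →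
      x ∈ Submodule.span R (Set.range w) := by
    induction i using WellFoundedLT.induction with
    | ind i ih =>
    intro x hxN hx
    have below (y : ι →₀ R) (hyN : y ∈ N) (hy : ∀ j, i ≤ j → y j = 0) :
        y ∈ Submodule.span R (Set.range w) := by
      rcases eq_or_ne y 0 with rfl | h0
      · exact zero_mem _
      obtain ⟨m, hm, hmax⟩ := y.support.exists_max_image id
        (Finsupp.support_nonempty_iff.2 h0)
      refine ih m ?_ y hyN fun j hj => ?_
      · by_contra hmi
        exact Finsupp.mem_support_iff.1 hm (hy m (not_lt.1 hmi))
      · by_contra hj0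
        exact absurd (hmax j (Finsupp.mem_support_iff.2 hj0)) (not_le.2 hj)
    have hxA : x i ∈ A i := ⟨x, (mem_L i _).2 ⟨hxN, hx⟩, rfl⟩
    obtain ⟨c, hc⟩ := (Submodule.IsPrincipal.mem_iff_eq_smul_generator (A i)).1 hxA
    by_cases hi : a i = 0
    · refine below x hxN fun j hj => ?_
      rcases hj.eq_or_lt with rfl | hj
      · rw [hc]
        change c • a i = 0
        rw [hi, smul_zero]
      · exact hx j hj
    · have hsub : x - c • w ⟨i, hi⟩ ∈ Submodule.span R (Set.range w) := by
        refine below _ (sub_mem hxN (N.smul_mem c (hvN i))) fun j hj => ?_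
        rcases hj.eq_or_lt with rfl | hj
        · simp [w, hva, hc, a]
        · simp [w, hv_gt hj, hx j hj]
      have := add_mem hsub
        (Submodule.smul_mem _ c (Submodule.subset_span (Set.mem_range_self (f := w) ⟨i, hi⟩)))
      rwa [sub_add_cancel] at this
  suffices h : Submodule.span R (Set.range w) = N from
    ⟨J, ⟨(Module.Basis.span hli).map (LinearEquiv.ofEq _ _ h)⟩⟩
  refine le_antisymm (Submodule.span_le.2 (Set.range_subset_iff.2 fun i => hvN i)) fun x hxN => ?_
  rcases eq_or_ne x 0 with rfl | h0
  · exact zero_mem _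
  obtain ⟨m, -, hmax⟩ := x.support.exists_max_image id
    (Finsupp.support_nonempty_iff.2 h0)
  refine key m x hxN fun j hj => ?_
  by_contra hj0
  exact absurd (hmax j (Finsupp.mem_support_iff.2 hj0)) (not_le.2 hj)

/-- If `Ext¹(M, R) = 0`, then for every presentation of `M` by a projective module, every linear
functional on the kernel extends. -/
theorem IsWhitehead.exists_extension {R M F : Type u} [CommRing R] [AddCommGroup M] [Module R M]
    [AddCommGroup F] [Module R F] [Module.Projective R F] (hM : IsWhitehead R M)
    (q : F →ₗ[R] M) (hq : Function.Surjective q) (g : LinearMap.ker q →ₗ[R] R) :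
    ∃ h : F →ₗ[R] R, ∀ x : LinearMap.ker q, h x = g x := by
  let P := ProjectiveResolution.of (ModuleCat.of R M)
  let π : P.complex.X 0 →ₗ[R] M := (P.π.f 0).hom
  have hπ : Function.Surjective π := (ModuleCat.epi_iff_surjective (P.π.f 0)).1 inferInstance
  have : Module.Projective R (P.complex.X 0) :=
    (IsProjective.iff_projective (P.complex.X 0)).2 (P.projective 0)
  obtain ⟨s, hs⟩ := Module.projective_lifting_property π q hπ
  obtain ⟨t, ht⟩ := Module.projective_lifting_property q π hq
  have hs' (x : F) : π (s x) = q x := LinearMap.congr_fun hs x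
  have ht' (x : P.complex.X 0) : q (t x) = π x := LinearMap.congr_fun ht x
  have hπd (y : P.complex.X 1) : π ((P.complex.d 1 0).hom y) = 0 :=
    congrArg (fun f => f.hom y) P.complex_d_comp_π_f_zero
  let d : P.complex.X 1 →ₗ[R] LinearMap.ker q :=
    (t ∘ₗ (P.complex.d 1 0).hom).codRestrict _ fun y => by
      simp [ht', hπd]
  have hexact : (P.complex.linearYonedaObj R (ModuleCat.of R R)).ExactAt 1 := by
    rw [HomologicalComplex.exactAt_iff_isZero_homology]
    refine Limits.IsZero.of_iso ?_
      (P.isoExt (R := R) 1 (ModuleCat.of R R)).symm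
    exact @ModuleCat.isZero_of_subsingleton _ _ _ hM
  rw [HomologicalComplex.exactAt_iff' _ 0 1 2 (by simp) (by simp),
    ShortComplex.moduleCat_exact_iff] at hexact
  obtain ⟨h, hh⟩ := hexact (ModuleCat.ofHom (g ∘ₗ d)) (by
    change P.complex.d 2 1 ≫ ModuleCat.ofHom (g ∘ₗ d) = 0
    ext y
    have : (P.complex.d 1 0).hom ((P.complex.d 2 1).hom y) = 0 :=
      congrArg (fun f => f.hom y) (P.complex.d_comp_d 2 1 0)
    have hd : d ((P.complex.d 2 1).hom y) = 0 := Subtype.ext (by simp [d, this])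
    simp [hd])
  have hh' (y : P.complex.X 1) : h.hom ((P.complex.d 1 0).hom y) = g (d y) :=
    congrArg (fun f : P.complex.X 1 ⟶ ModuleCat.of R R => f.hom y) hh
  let r : F →ₗ[R] LinearMap.ker q :=
    (LinearMap.id - t ∘ₗ s).codRestrict _ fun x => by simp [ht', hs']
  refine ⟨h.hom ∘ₗ s + g ∘ₗ r, fun x => ?_⟩
  obtain ⟨y, hy⟩ := (ShortComplex.moduleCat_exact_iff _).1 P.exact₀ (s x) (by
    exact (hs' x).trans x.2)
  replace hy : (P.complex.d 1 0).hom y = s x := hy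
  have hx : d y + r x = x := Subtype.ext (by simp [d, r, hy])
  calc (h.hom ∘ₗ s + g ∘ₗ r) x = h.hom (s x) + g (r x) := rfl
    _ = g x := by rw [← hy, hh', ← map_add, hx]

/-- Given a submodule `K` of a free module, with a basis whose coordinates lie in the image of `R₀`,
where `R` has a large enough basis over `R₀`: if functionals on `K` extend, then `K` is a direct
summand. -/
theorem Submodule.exists_retraction_of_extension {R₀ R S J I : Type*} [CommRing R₀] [CommRing R]
    [Algebra R₀ R] (b : Module.Basis I R₀ R) (K : Submodule R (S →₀ R)) (κ : Module.Basis J R K)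
    (hκ : ∀ j s, (κ j : S →₀ R) s ∈ Set.range (algebraMap R₀ R)) (e : J ↪ I)
    (hext : ∀ g : K →ₗ[R] R, ∃ h : (S →₀ R) →ₗ[R] R, ∀ x : K, h x = g x) :
    ∃ ρ : (S →₀ R) →ₗ[R] K, ∀ x : K, ρ x = x := by
  obtain ⟨h, hh⟩ := hext (κ.constr R fun j => b (e j))
  let p : R →ₗ[R₀] K :=
    (Finsupp.linearCombination R₀ κ) ∘ₗ
      Finsupp.lcomapDomain e e.injective ∘ₗ b.repr.toLinearMap
  have hp (j : J) : p (b (e j)) = κ j := by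
    simp [p, Finsupp.lcomapDomain]
  let ρ : (S →₀ R) →ₗ[R] K := Finsupp.linearCombination R fun s => p (h (Finsupp.single s 1))
  have hρ : ρ ∘ₗ K.subtype = LinearMap.id := by
    refine κ.ext fun j => ?_
    choose c hc using hκ j
    calc ρ (κ j) = (κ j : S →₀ R).sum fun s a => a • p (h (Finsupp.single s 1)) := rfl
      _ = (κ j : S →₀ R).sum fun s a => p (h (Finsupp.single s a)) := by
        refine Finsupp.sum_congr fun s _ => ?_
        rw [← hc s, algebraMap_smul, ← map_smul, ← algebraMap_smul R (c s) (h _), ← map_smul,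
          Finsupp.smul_single_one]
      _ = p (h (κ j)) := by
        rw [← map_finsuppSum, ← map_finsuppSum, Finsupp.sum_single]
      _ = κ j := by rw [hh, Module.Basis.constr_basis, hp]
  exact ⟨ρ, LinearMap.congr_fun hρ⟩

/-- A field of cardinality `> κ` has dimension at least `κ` over any subfield of cardinality
`≤ κ`. -/
theorem Subfield.exists_basis_card_ge {k : Type u} [Field k] (k₀ : Subfield k)
    {κ : Cardinal.{u}} (hκ : ℵ₀ ≤ κ) (hk₀ : #k₀ ≤ κ) (hk : κ < #k) :
    ∃ (I : Type u) (_ : Module.Basis I k₀ k), κ ≤ #I := by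
  let b := Module.Basis.ofVectorSpace k₀ k
  refine ⟨_, b, ?_⟩
  by_contra! hI
  refine hk.not_ge ?_
  rw [b.repr.toEquiv.cardinal_eq]
  rcases finite_or_infinite k₀ with h₀ | h₀
  · rcases finite_or_infinite (Module.Basis.ofVectorSpaceIndex k₀ k) with h | h
    · exact (Cardinal.mk_le_aleph0).trans hκ
    · rw [Cardinal.mk_finsupp_of_infinite]
      exact max_le hI.le hk₀
  · have : Nonempty (Module.Basis.ofVectorSpaceIndex k₀ k) := b.index_nonempty
    rw [Cardinal.mk_finsupp_of_infinite']
    exact max_le hI.le hk₀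

/-- Over `k[X]` with `k` a field of cardinality `> κ`, every `κ`-generated Whitehead module is
free. -/
theorem Polynomial.free_of_isWhitehead {k : Type u} [Field k] {κ : Cardinal.{u}} (hκ : ℵ₀ ≤ κ)
    (hk : κ < #k) (M : Type u) [AddCommGroup M] [Module k[X] M] (hgen : IsGenerated k[X] M κ)
    (hM : IsWhitehead k[X] M) : Module.Free k[X] M := by
  obtain ⟨S, hS, hspan⟩ := hgen
  let q : (S →₀ k[X]) →ₗ[k[X]] M := Finsupp.linearCombination k[X] (↑)
  have hq : Function.Surjective q := by
    rw [← LinearMap.range_eq_top, Finsupp.range_linearCombination, Subtype.range_coe, hspan]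
  obtain ⟨J, ⟨b⟩⟩ := (LinearMap.ker q).exists_basis_subset_of_pid
  have hJ : #J ≤ κ := (mk_set_le J).trans hS
  let T : Set k := Set.range fun x : J × S × ℕ => ((b x.1 : S →₀ k[X]) x.2.1).coeff x.2.2
  have hT : #T ≤ κ := by
    refine mk_range_le.trans ?_
    simp only [mk_prod, lift_id, mk_nat, lift_aleph0, lift_uzero]
    exact mul_le_of_le hκ hJ (mul_le_of_le hκ hS hκ)
  let k₀ := Subfield.closure T
  have hk₀ : #k₀ ≤ κ := (Subfield.cardinalMk_closure_le_max T).trans (max_le hT hκ)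
  obtain ⟨I, c, hI⟩ := k₀.exists_basis_card_ge hκ hk₀ hk
  let : Algebra k₀[X] k[X] := Polynomial.algebra k₀ k
  have hbc : IsBaseChange k₀[X] (IsScalarTower.toAlgHom k₀ k k[X]).toLinearMap :=
    Algebra.IsPushout.out
  obtain ⟨e⟩ := hJ.trans hI
  obtain ⟨ρ, hρ⟩ := Submodule.exists_retraction_of_extension (hbc.basis c) _ b
    (fun j s => by
      refine (Polynomial.mem_lifts _).1 ((Polynomial.lifts_iff_coeff_lifts _).2 fun n => ?_)
      exact ⟨⟨_, Subfield.subset_closure ⟨(j, s, n), rfl⟩⟩, rfl⟩) e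
    (hM.exists_extension q hq)
  obtain ⟨J', ⟨b'⟩⟩ := (LinearMap.ker ρ).exists_basis_subset_of_pid
  have hcompl : IsCompl (LinearMap.ker q) (LinearMap.ker ρ) := LinearMap.isCompl_of_proj hρ
  exact Module.Free.of_basis (b'.map
    ((Submodule.quotientEquivOfIsCompl _ _ hcompl).symm.trans (q.quotKerEquivOfSurjective hq)))

/-- Eklof–Shelah, Theorem 2: there is a p.i.d. `R` of cardinality `ℵ₂`
such that an `ℵ₁`-generated `R`-module is Whitehead only if it is free. -/
theorem exists_pid_aleph_two_whitehead_implies_free :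
    ∃ (R : Type) (_ : CommRing R),
      IsDomain R ∧ IsPrincipalIdealRing R ∧ ¬ IsField R ∧
      #R = aleph 2 ∧
      ∀ (M : Type) (_ : AddCommGroup M) (_ : Module R M),
        IsGenerated R M (aleph 1) → IsWhitehead R M → Module.Free R M := by
  let k : Type := (aleph 2).out
  have hk : #k = aleph 2 := mk_out _
  have : Infinite k := infinite_iff.2 (hk ▸ aleph0_le_aleph 2)
  obtain ⟨_⟩ := Infinite.nonempty_field (α := k)
  refine ⟨k[X], inferInstance, inferInstance, inferInstance, Polynomial.not_isField k, ?_,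
    fun M _ _ => Polynomial.free_of_isWhitehead (aleph0_le_aleph 1) ?_ M⟩
  · rw [Polynomial.cardinalMk_eq_max, hk, max_eq_left (aleph0_le_aleph 2)]
  · rw [hk]
    exact aleph_lt_aleph.2 one_lt_two
end

section
/- Suppose R′ is an integral domain with a prime element p such that ⋂_{n ∈ ℕ} pⁿR′ = 0. Then the localization R′_{(p)} of R′ at the prime ideal pR′ (i.e., the localization at the complement of pR′) is a principal ideal domain. -/
/-!
Statement 4 (Eklof–Shelah, Lemma 1): if `R'` is an integral domain with a prime
element `p` such that `⋂ₙ pⁿR' = 0`, then the localization of `R'` at the prime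
ideal `pR'` is a principal ideal domain.
-/

universe u

/-- An element `p` of a ring with `⋂ₙ pⁿR = 0` has finite multiplicity in every nonzero element. -/
theorem finiteMultiplicity_of_iInf_span_pow_eq_bot {R : Type*} [CommRing R] {p : R}
    (hint : (⨅ n : ℕ, Ideal.span {p ^ n} : Ideal R) = ⊥) {a : R} (ha : a ≠ 0) :
    FiniteMultiplicity p a := by
  by_contra h
  refine ha ?_
  rw [← Ideal.mem_bot, ← hint, Ideal.mem_iInf]
  exact fun n => Ideal.mem_span_singleton.mpr (FiniteMultiplicity.not_iff_forall.mp h n)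

theorem isPrincipalIdealRing_localization_atPrime {R' : Type u} [CommRing R'] [IsDomain R']
    (p : R') (hp : Prime p)
    (hint : (⨅ n : ℕ, Ideal.span {p ^ n} : Ideal R') = ⊥) :
    IsPrincipalIdealRing
      (Localization (Ideal.primeCompl (Ideal.span {p})
        (hp := (Ideal.span_singleton_prime hp.ne_zero).mpr hp))) := by
  have hP : (Ideal.span {p}).IsPrime := (Ideal.span_singleton_prime hp.ne_zero).mpr hp
  let S := Localization.AtPrime (Ideal.span {p})
  have hinj : Function.Injective (algebraMap R' S) :=
    IsLocalization.injective S (Ideal.primeCompl_le_nonZeroDivisors (Ideal.span {p}))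
  have hirr : Irreducible (algebraMap R' S p) := by
    refine Prime.irreducible ((Ideal.span_singleton_prime ?_).mp ?_)
    · exact (map_ne_zero_iff _ hinj).mpr hp.ne_zero
    · rw [← Set.image_singleton, ← Ideal.map_span, Localization.AtPrime.map_eq_maximalIdeal]
      infer_instance
  have hfac : IsDiscreteValuationRing.HasUnitMulPowIrreducibleFactorization S := by
    refine ⟨algebraMap R' S p, hirr, fun {x} hx => ?_⟩
    obtain ⟨a, s, rfl⟩ := IsLocalization.exists_mk'_eq (Ideal.span {p}).primeCompl x
    have ha : a ≠ 0 := by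
      rintro rfl
      exact hx (IsLocalization.mk'_zero s)
    obtain ⟨b, hab, hb⟩ :=
      (finiteMultiplicity_of_iInf_span_pow_eq_bot hint ha).exists_eq_pow_mul_and_not_dvd
    have hb' : b ∈ (Ideal.span {p}).primeCompl := fun h => hb (Ideal.mem_span_singleton.mp h)
    have hu : IsUnit (IsLocalization.mk' S b s) :=
      (IsLocalization.AtPrime.isUnit_mk'_iff S (Ideal.span {p}) b s).mpr hb'
    refine ⟨multiplicity p a, hu.unit, ?_⟩
    rw [IsUnit.unit_spec, ← map_pow, IsLocalization.mul_mk'_eq_mk'_of_mul, ← hab]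
  exact (IsDiscreteValuationRing.ofHasUnitMulPowIrreducibleFactorization hfac).toIsPrincipalIdealRing
end
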